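/- Fix 1 < q < +∞, 0 < p < +∞, and 0 < T ≤ +∞. Let u : [0,T) × ℝ³ → ℝ³ be such that for each t ∈ [0,T) the vector field u(t,·) is a divergence-free Schwartz vector field, with strain tensor S(t,·) and vorticity ω(t,·) = ∇ × u(t,·), and suppose t ↦ ‖2S(t,·)e₃‖_{L^q} and t ↦ ‖(e₃ × ω)(t,·)‖_{L^q} are measurable. Then ∫₀^T ‖(e₃ × ω)(t,·)‖_{L^q}^p dt = +∞ if and only if ∫₀^T ‖2S(t,·)e₃‖_{L^q}^p dt = +∞. In particular, the Chae–Choe regularity criterion on the two vorticity components e₃ × ω is equivalent to the regularity criterion on S e₃. -/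

import Mathlib

open MeasureTheory ENNReal

noncomputable section

/-- The standard basis vectors of `EuclideanSpace ℝ (Fin 3)`. -/
def ee (i : Fin 3) : EuclideanSpace ℝ (Fin 3) := EuclideanSpace.single i 1

/-- The partial derivative `∂ᵢ uⱼ` of a vector field given by its three
(Schwartz) components. -/
def pdW (u : Fin 3 → SchwartzMap (EuclideanSpace ℝ (Fin 3)) ℝ) (i j : Fin 3)
    (x : EuclideanSpace ℝ (Fin 3)) : ℝ :=
  fderiv ℝ (u j) x (ee i)

/-- View a triple of reals as a vector in `ℝ³` with the Euclidean norm. -/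
def toE3 (f : Fin 3 → ℝ) : EuclideanSpace ℝ (Fin 3) :=
  (WithLp.equiv 2 (Fin 3 → ℝ)).symm f

/-- The strain tensor `S_ij = (∂ᵢ uⱼ + ∂ⱼ uᵢ)/2`. -/
def strainW (u : Fin 3 → SchwartzMap (EuclideanSpace ℝ (Fin 3)) ℝ)
    (x : EuclideanSpace ℝ (Fin 3)) : Matrix (Fin 3) (Fin 3) ℝ :=
  Matrix.of fun i j => (pdW u i j x + pdW u j i x) / 2

/-- The vorticity `ω = ∇ × u` (with 0-based indices). -/
def vortW (u : Fin 3 → SchwartzMap (EuclideanSpace ℝ (Fin 3)) ℝ)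
    (x : EuclideanSpace ℝ (Fin 3)) : Fin 3 → ℝ :=
  ![pdW u 1 2 x - pdW u 2 1 x, pdW u 2 0 x - pdW u 0 2 x, pdW u 0 1 x - pdW u 1 0 x]

/-- The cross product in `ℝ³`. -/
def cross (a b : Fin 3 → ℝ) : Fin 3 → ℝ :=
  ![a 1 * b 2 - a 2 * b 1, a 2 * b 0 - a 0 * b 2, a 0 * b 1 - a 1 * b 0]

/-- The field `x ↦ (e₃ × ω)(t, x)` of a time-dependent Schwartz vector field. -/
def e3CrossVortField (u : ℝ → Fin 3 → SchwartzMap (EuclideanSpace ℝ (Fin 3)) ℝ) (t : ℝ)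
    (x : EuclideanSpace ℝ (Fin 3)) : EuclideanSpace ℝ (Fin 3) :=
  toE3 (cross ![0, 0, 1] (vortW (u t) x))

/-- The field `x ↦ 2 S(t, x) e₃` of a time-dependent Schwartz vector field. -/
def twoStrainE3Field (u : ℝ → Fin 3 → SchwartzMap (EuclideanSpace ℝ (Fin 3)) ℝ) (t : ℝ)
    (x : EuclideanSpace ℝ (Fin 3)) : EuclideanSpace ℝ (Fin 3) :=
  toE3 (((2 : ℝ) • strainW (u t) x).mulVec ![0, 0, 1])

open scoped SchwartzMap LineDeriv Laplacian

section GaussianAverage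

set_option linter.unusedSectionVars false

variable {V : Type*} [NormedAddCommGroup V] [InnerProductSpace ℝ V] [FiniteDimensional ℝ V]
  [MeasurableSpace V] [BorelSpace V]

/-- The Gaussian weight `exp (-π ‖z‖²)`, of total mass one. -/
def gaussWeight (z : V) : ℝ := Real.exp (-Real.pi * ‖z‖ ^ 2)

/-- The average of `f` over a Gaussian centred at `x` with standard deviation proportional
to `s`, i.e. the heat flow started at `f`, parametrized by the square root of time. -/
def gaussAvg (s : ℝ) (f : 𝓢(V, ℝ)) (x : V) : ℝ := ∫ z, gaussWeight z * f (x + s • z)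

lemma gaussWeight_pos (z : V) : 0 < gaussWeight z := Real.exp_pos _

lemma continuous_gaussWeight : Continuous (gaussWeight : V → ℝ) := by
  unfold gaussWeight; fun_prop

lemma integral_gaussWeight : ∫ z : V, gaussWeight z = 1 := by
  unfold gaussWeight
  rw [GaussianFourier.integral_rexp_neg_mul_sq_norm Real.pi_pos, div_self Real.pi_ne_zero,
    Real.one_rpow]

/-- All polynomial moments of the Gaussian weight are finite. -/
lemma integrable_moment_gaussWeight (m : ℕ) {S : ℝ} (hS : 0 ≤ S) :
    Integrable fun z : V => gaussWeight z * (1 + S * ‖z‖) ^ m := by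
  have h1 : Integrable fun z : V => Real.exp (-1 * ‖z‖ ^ 2) := by
    apply Integrable.of_integral_ne_zero
    rw [GaussianFourier.integral_rexp_neg_mul_sq_norm one_pos]
    positivity
  refine (h1.const_mul ((m.factorial : ℝ) * Real.exp (1 + S ^ 2 / 2))).mono'
    (by unfold gaussWeight; fun_prop) (.of_forall fun z => ?_)
  have hz := norm_nonneg z
  have h0 : 0 ≤ 1 + S * ‖z‖ := by positivity
  rw [Real.norm_of_nonneg (mul_nonneg (gaussWeight_pos z).le (by positivity))]
  have h2 := Real.pow_div_factorial_le_exp _ h0 m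
  rw [div_le_iff₀ (by positivity)] at h2
  calc gaussWeight z * (1 + S * ‖z‖) ^ m
      ≤ gaussWeight z * (Real.exp (1 + S * ‖z‖) * m.factorial) := by
        gcongr; exact (gaussWeight_pos z).le
    _ = m.factorial * Real.exp (-Real.pi * ‖z‖ ^ 2 + (1 + S * ‖z‖)) := by
        rw [Real.exp_add (-Real.pi * ‖z‖ ^ 2)]; unfold gaussWeight; ring
    _ ≤ m.factorial * Real.exp (1 + S ^ 2 / 2 + -1 * ‖z‖ ^ 2) := by
        refine mul_le_mul_of_nonneg_left (Real.exp_le_exp.2 ?_) (by positivity)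
        nlinarith [Real.pi_gt_three, sq_nonneg (S - ‖z‖), sq_nonneg ‖z‖]
    _ = _ := by rw [Real.exp_add (1 + S ^ 2 / 2)]; ring

lemma integrable_gaussWeight : Integrable (gaussWeight : V → ℝ) := by
  simpa using integrable_moment_gaussWeight (V := V) 0 le_rfl

/-- Schwartz functions decay faster than any power of `1 + ‖x‖`. -/
lemma SchwartzMap.exists_decay (f : 𝓢(V, ℝ)) (m : ℕ) :
    ∃ C, 0 ≤ C ∧ ∀ x, |f x| ≤ C * ((1 + ‖x‖) ^ m)⁻¹ := by
  refine ⟨2 ^ m * (Finset.Iic (m, 0)).sup (fun m => SchwartzMap.seminorm ℝ m.1 m.2) f,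
    by positivity, fun x => ?_⟩
  have := SchwartzMap.one_add_le_sup_seminorm_apply (𝕜 := ℝ) (m := (m, 0)) (k := m) (n := 0)
    le_rfl le_rfl f x
  rw [norm_iteratedFDeriv_zero, Real.norm_eq_abs] at this
  rw [← div_eq_mul_inv, le_div_iff₀ (by positivity), mul_comm]
  exact this

lemma one_add_norm_le_mul {s S : ℝ} (hs : |s| ≤ S) (x z : V) :
    1 + ‖x‖ ≤ (1 + ‖x + s • z‖) * (1 + S * ‖z‖) := by
  have h1 : ‖x‖ ≤ ‖x + s • z‖ + |s| * ‖z‖ := by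
    calc ‖x‖ = ‖(x + s • z) - s • z‖ := by simp
      _ ≤ _ := by
        refine (norm_sub_le _ _).trans ?_
        rw [norm_smul, Real.norm_eq_abs]
  have h2 : |s| * ‖z‖ ≤ S * ‖z‖ := by gcongr
  have h3 : 0 ≤ S * ‖z‖ := le_trans (by positivity) h2
  nlinarith [norm_nonneg (x + s • z)]

/-- Translates of a Schwartz function decay, with constants controlled by the translation. -/
lemma SchwartzMap.exists_translate_decay (f : 𝓢(V, ℝ)) (m : ℕ) :
    ∃ C, 0 ≤ C ∧ ∀ {s S : ℝ}, |s| ≤ S → ∀ x z,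
      |f (x + s • z)| ≤ C * ((1 + ‖x‖) ^ m)⁻¹ * (1 + S * ‖z‖) ^ m := by
  obtain ⟨C, hC, h⟩ := f.exists_decay m
  refine ⟨C, hC, fun {s S} hs x z => (h _).trans ?_⟩
  have hS : 0 ≤ S := (abs_nonneg s).trans hs
  rw [mul_assoc]
  gcongr
  rw [inv_mul_eq_div, le_div_iff₀ (by positivity), inv_mul_le_iff₀ (by positivity), ← mul_pow]
  gcongr
  exact one_add_norm_le_mul hs x z

lemma SchwartzMap.exists_bound (f : 𝓢(V, ℝ)) : ∃ C, 0 ≤ C ∧ ∀ x, |f x| ≤ C := by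
  obtain ⟨C, hC, h⟩ := f.exists_decay 0
  exact ⟨C, hC, fun x => by simpa using h x⟩

lemma integrable_gaussWeight_mul (s : ℝ) (f : 𝓢(V, ℝ)) (x : V) :
    Integrable fun z => gaussWeight z * f (x + s • z) := by
  obtain ⟨C, hC, h⟩ := f.exists_bound
  refine (integrable_gaussWeight.mul_const C).mono'
    (by have := continuous_gaussWeight (V := V); fun_prop) (.of_forall fun z => ?_)
  rw [norm_mul, Real.norm_of_nonneg (gaussWeight_pos z).le]
  gcongr
  · exact (gaussWeight_pos z).le
  · exact h _

/-- Gaussian averages decay, uniformly for bounded widths. -/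
lemma exists_gaussAvg_decay (f : 𝓢(V, ℝ)) (m : ℕ) {S : ℝ} (hS : 0 ≤ S) :
    ∃ C, 0 ≤ C ∧ ∀ s, |s| ≤ S → ∀ x, |gaussAvg s f x| ≤ C * ((1 + ‖x‖) ^ m)⁻¹ := by
  obtain ⟨C, hC, h⟩ := f.exists_translate_decay m
  have hI := integrable_moment_gaussWeight (V := V) m hS
  have h0 : 0 ≤ ∫ z : V, gaussWeight z * (1 + S * ‖z‖) ^ m :=
    integral_nonneg fun z => mul_nonneg (gaussWeight_pos z).le (by positivity)
  refine ⟨C * ∫ z : V, gaussWeight z * (1 + S * ‖z‖) ^ m, by positivity, fun s hs x => ?_⟩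
  rw [← Real.norm_eq_abs, mul_right_comm, ← integral_const_mul]
  refine norm_integral_le_of_norm_le (hI.const_mul _) (.of_forall fun z => ?_)
  rw [norm_mul, Real.norm_of_nonneg (gaussWeight_pos z).le, Real.norm_eq_abs]
  calc _ ≤ gaussWeight z * (C * ((1 + ‖x‖) ^ m)⁻¹ * (1 + S * ‖z‖) ^ m) := by
        gcongr
        · exact (gaussWeight_pos z).le
        · exact h hs x z
    _ = _ := by ring

/-- Gaussian averages are bounded, uniformly in the width. -/
lemma exists_gaussAvg_bound (f : 𝓢(V, ℝ)) :
    ∃ C, 0 ≤ C ∧ ∀ s x, |gaussAvg s f x| ≤ C := by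
  obtain ⟨C, hC, h⟩ := f.exists_bound
  refine ⟨C, hC, fun s x => ?_⟩
  rw [← Real.norm_eq_abs, ← one_mul C, ← integral_gaussWeight (V := V), ← integral_mul_const]
  refine norm_integral_le_of_norm_le (integrable_gaussWeight.mul_const C) (.of_forall fun z => ?_)
  rw [norm_mul, Real.norm_of_nonneg (gaussWeight_pos z).le]
  gcongr
  · exact (gaussWeight_pos z).le
  · exact h _

lemma continuous_gaussAvg (s : ℝ) (f : 𝓢(V, ℝ)) : Continuous (gaussAvg s f) := by
  obtain ⟨C, hC, h⟩ := f.exists_bound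
  refine continuous_of_dominated (bound := fun z => gaussWeight z * C)
    (fun x => (integrable_gaussWeight_mul s f x).aestronglyMeasurable)
    (fun x => .of_forall fun z => ?_) (integrable_gaussWeight.mul_const C)
    (.of_forall fun z => by fun_prop)
  rw [norm_mul, Real.norm_of_nonneg (gaussWeight_pos z).le]
  gcongr
  · exact (gaussWeight_pos z).le
  · exact h _

lemma integrable_inv_one_add_norm_pow :
    Integrable fun x : V => ((1 + ‖x‖) ^ (Module.finrank ℝ V + 1))⁻¹ := by
  have := integrable_one_add_norm (E := V) (μ := volume)
    (r := ((Module.finrank ℝ V + 1 : ℕ) : ℝ)) (by push_cast; linarith)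
  refine this.congr (.of_forall fun x => ?_)
  simp only
  rw [Real.rpow_neg (by positivity), Real.rpow_natCast]

lemma integrable_gaussAvg (s : ℝ) (f : 𝓢(V, ℝ)) : Integrable (gaussAvg s f) := by
  obtain ⟨C, hC, h⟩ := exists_gaussAvg_decay f (Module.finrank ℝ V + 1) (abs_nonneg s)
  exact (integrable_inv_one_add_norm_pow.const_mul C).mono'
    (continuous_gaussAvg s f).aestronglyMeasurable (.of_forall fun x => h s le_rfl x)

@[simp] lemma gaussAvg_zero_left (f : 𝓢(V, ℝ)) (x : V) : gaussAvg 0 f x = f x := by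
  simp [gaussAvg, integral_mul_const, integral_gaussWeight]

lemma gaussAvg_sum {ι : Type*} (t : Finset ι) (s : ℝ) (f : ι → 𝓢(V, ℝ)) (x : V) :
    gaussAvg s (∑ i ∈ t, f i) x = ∑ i ∈ t, gaussAvg s (f i) x := by
  unfold gaussAvg
  rw [← integral_finsetSum _ fun i _ => integrable_gaussWeight_mul s (f i) x]
  simp [Finset.mul_sum]

/-- Gaussian averages commute with differentiation. -/
lemma hasLineDerivAt_gaussAvg (s : ℝ) (f : 𝓢(V, ℝ)) (x v : V) :
    HasLineDerivAt ℝ (gaussAvg s f) (gaussAvg s (∂_{v} f) x) x v := by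
  obtain ⟨C, hC, h⟩ := (∂_{v} f).exists_bound
  have key := (hasDerivAt_integral_of_dominated_loc_of_deriv_le (μ := volume) (𝕜 := ℝ)
    (F := fun t z => gaussWeight z * f (x + t • v + s • z))
    (F' := fun t z => gaussWeight z * (∂_{v} f) (x + t • v + s • z)) (x₀ := (0 : ℝ))
    (bound := fun z : V => gaussWeight z * C) Filter.univ_mem
    (.of_forall fun t => (integrable_gaussWeight_mul s f _).aestronglyMeasurable)
    (integrable_gaussWeight_mul s f _)
    (integrable_gaussWeight_mul s (∂_{v} f) _).aestronglyMeasurable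
    (.of_forall fun z t _ => ?_) (integrable_gaussWeight.mul_const C)
    (.of_forall fun z t _ => ?_)).2
  · simpa [HasLineDerivAt, gaussAvg] using key
  · rw [norm_mul, Real.norm_of_nonneg (gaussWeight_pos z).le]
    gcongr
    · exact (gaussWeight_pos z).le
    · exact h _
  · refine HasDerivAt.const_mul _ ?_
    have h1 : HasDerivAt (fun t : ℝ => x + t • v + s • z) v t := by
      simpa using (((hasDerivAt_id t).smul_const v).const_add x).add_const (s • z)
    exact (f.hasFDerivAt (x := x + t • v + s • z)).comp_hasDerivAt t h1

lemma hasLineDerivAt_gaussWeight (z v : V) :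
    HasLineDerivAt ℝ (gaussWeight : V → ℝ) (-(2 * Real.pi) * (inner ℝ z v * gaussWeight z)) z v := by
  have h1 : HasDerivAt (fun t : ℝ => z + t • v) v 0 := by
    simpa using ((hasDerivAt_id (0 : ℝ)).smul_const v).const_add z
  have h2 := ((h1.norm_sq).const_mul (-Real.pi)).exp
  simp only [zero_smul, add_zero] at h2
  unfold HasLineDerivAt gaussWeight
  convert! h2 using 1
  ring

lemma integrable_inner_mul_gaussWeight_mul (s : ℝ) (f : 𝓢(V, ℝ)) (x v : V) :
    Integrable fun z => inner ℝ z v * gaussWeight z * f (x + s • z) := by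
  obtain ⟨C, hC, h⟩ := f.exists_bound
  refine ((integrable_moment_gaussWeight (V := V) 1 zero_le_one).mul_const (‖v‖ * C)).mono'
    (by have := continuous_gaussWeight (V := V); fun_prop) (.of_forall fun z => ?_)
  rw [norm_mul, norm_mul, Real.norm_of_nonneg (gaussWeight_pos z).le]
  have := (gaussWeight_pos z).le
  calc _ ≤ ‖z‖ * ‖v‖ * gaussWeight z * C := by
        gcongr
        · exact norm_inner_le_norm z v
        · exact h _
    _ ≤ (1 + 1 * ‖z‖) * ‖v‖ * gaussWeight z * C := by gcongr; linarith
    _ = _ := by ring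

/-- Gaussian integration by parts. -/
lemma integral_inner_mul_gaussWeight_mul (s : ℝ) (f : 𝓢(V, ℝ)) (x v : V) :
    ∫ z, inner ℝ z v * gaussWeight z * f (x + s • z)
      = s / (2 * Real.pi) * gaussAvg s (∂_{v} f) x := by
  have hf : ∀ z, HasLineDerivAt ℝ (fun z => f (x + s • z)) (s * (∂_{v} f) (x + s • z)) z v := by
    intro z
    have h1 : HasDerivAt (fun t : ℝ => x + s • (z + t • v)) (s • v) 0 := by
      simpa using ((((hasDerivAt_id (0 : ℝ)).smul_const v).const_add z).const_smul s).const_add x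
    have h2 := (f.hasFDerivAt (x := x + s • (z + (0 : ℝ) • v))).comp_hasDerivAt 0 h1
    simpa [HasLineDerivAt, SchwartzMap.lineDerivOp_apply_eq_fderiv, Function.comp_def] using h2
  have key := integral_bilinear_hasLineDerivAt_right_eq_neg_left_of_integrable (μ := volume)
    (f := fun z => f (x + s • z)) (f' := fun z => s * (∂_{v} f) (x + s • z))
    (g := (gaussWeight : V → ℝ)) (g' := fun z => -(2 * Real.pi) * (inner ℝ z v * gaussWeight z))
    (v := v) (B := ContinuousLinearMap.mul ℝ ℝ)
    (by refine ((integrable_gaussWeight_mul s (∂_{v} f) x).const_mul s).congr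
          (.of_forall fun z => ?_)
        simp; ring)
    (by refine ((integrable_inner_mul_gaussWeight_mul s f x v).const_mul (-(2 * Real.pi))).congr
          (.of_forall fun z => ?_)
        simp; ring)
    (by refine (integrable_gaussWeight_mul s f x).congr (.of_forall fun z => ?_)
        simp; ring)
    (fun z _ => hf z) (fun z _ => hasLineDerivAt_gaussWeight z v)
  have e1 : ∫ z, ContinuousLinearMap.mul ℝ ℝ (f (x + s • z))
      (-(2 * Real.pi) * (inner ℝ z v * gaussWeight z))
      = -(2 * Real.pi) * ∫ z, inner ℝ z v * gaussWeight z * f (x + s • z) := by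
    rw [← integral_const_mul]; congr 1; ext z; simp; ring
  have e2 : ∫ z, ContinuousLinearMap.mul ℝ ℝ (s * (∂_{v} f) (x + s • z)) (gaussWeight z)
      = s * gaussAvg s (∂_{v} f) x := by
    unfold gaussAvg
    rw [← integral_const_mul]; congr 1; ext z; simp; ring
  rw [e1, e2] at key
  have := Real.pi_pos
  field_simp
  linarith

/-- The heat equation for Gaussian averages. -/
lemma hasDerivAt_gaussAvg (s : ℝ) (f : 𝓢(V, ℝ)) (x : V) :
    HasDerivAt (fun r => gaussAvg r f x) (s / (2 * Real.pi) * gaussAvg s (Δ f) x) s := by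
  let b := stdOrthonormalBasis ℝ V
  have hfd : ∀ y z : V, fderiv ℝ f y z = ∑ i, inner ℝ z (b i) * (∂_{b i} f) y := by
    intro y z
    conv_lhs => rw [← b.sum_repr z]
    simp [SchwartzMap.lineDerivOp_apply_eq_fderiv, b.repr_apply_apply, real_inner_comm]
  choose C hC h using fun i => (∂_{b i} f).exists_bound
  have key := (hasDerivAt_integral_of_dominated_loc_of_deriv_le (μ := volume) (𝕜 := ℝ)
    (F := fun r z => gaussWeight z * f (x + r • z))
    (F' := fun r z => ∑ i, inner ℝ z (b i) * gaussWeight z * (∂_{b i} f) (x + r • z)) (x₀ := s)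
    (bound := fun z : V => gaussWeight z * (1 + 1 * ‖z‖) ^ 1 * ∑ i, C i) Filter.univ_mem
    (.of_forall fun t => (integrable_gaussWeight_mul t f _).aestronglyMeasurable)
    (integrable_gaussWeight_mul s f _)
    (integrable_finsetSum _ fun i _ =>
      integrable_inner_mul_gaussWeight_mul s (∂_{b i} f) x (b i)).aestronglyMeasurable
    (.of_forall fun z t _ => ?_)
    ((integrable_moment_gaussWeight 1 zero_le_one).mul_const _)
    (.of_forall fun z t _ => ?_)).2
  · rw [integral_finsetSum _ fun i _ =>
      integrable_inner_mul_gaussWeight_mul s (∂_{b i} f) x (b i)] at key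
    simp only [integral_inner_mul_gaussWeight_mul] at key
    rwa [SchwartzMap.laplacian_eq_sum b, gaussAvg_sum, Finset.mul_sum]
  · rw [Finset.mul_sum]
    refine norm_sum_le_of_le _ fun i _ => ?_
    rw [norm_mul, norm_mul, Real.norm_of_nonneg (gaussWeight_pos z).le]
    have := (gaussWeight_pos z).le
    calc _ ≤ ‖z‖ * ‖b i‖ * gaussWeight z * C i := by
          gcongr
          · exact norm_inner_le_norm z (b i)
          · exact h i _
      _ ≤ (1 + 1 * ‖z‖) * 1 * gaussWeight z * C i := by
          have := hC i
          rw [b.norm_eq_one]; gcongr; linarith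
      _ = _ := by ring
  · have h1 : HasDerivAt (fun t : ℝ => x + t • z) z t := by
      simpa using ((hasDerivAt_id t).smul_const z).const_add x
    have h2 := ((f.hasFDerivAt (x := x + t • z)).comp_hasDerivAt t h1).const_mul (gaussWeight z)
    rw [hfd, Finset.mul_sum] at h2
    convert! h2 using 1
    exact Finset.sum_congr rfl fun i _ => by ring

/-- Gaussian averages of a derivative decay as the width grows. -/
lemma exists_abs_gaussAvg_lineDeriv_le (f : 𝓢(V, ℝ)) (v : V) :
    ∃ C, 0 ≤ C ∧ ∀ s, 0 < s → ∀ x, |gaussAvg s (∂_{v} f) x| ≤ C / s := by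
  obtain ⟨C, hC, h⟩ := f.exists_bound
  have hm := (integrable_moment_gaussWeight (V := V) 1 zero_le_one).mul_const (‖v‖ * C)
  set K := ∫ z : V, gaussWeight z * (1 + 1 * ‖z‖) ^ 1 * (‖v‖ * C)
  have hK : 0 ≤ K := integral_nonneg fun z =>
    mul_nonneg (mul_nonneg (gaussWeight_pos z).le (by positivity)) (by positivity)
  have hpi := Real.pi_pos
  refine ⟨2 * Real.pi * K, by positivity, fun s hs x => ?_⟩
  have h1 : |∫ z, inner ℝ z v * gaussWeight z * f (x + s • z)| ≤ K := by
    rw [← Real.norm_eq_abs]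
    refine norm_integral_le_of_norm_le hm (.of_forall fun z => ?_)
    rw [norm_mul, norm_mul, Real.norm_of_nonneg (gaussWeight_pos z).le]
    have := (gaussWeight_pos z).le
    calc _ ≤ ‖z‖ * ‖v‖ * gaussWeight z * C := by
          gcongr
          · exact norm_inner_le_norm z v
          · exact h _
      _ ≤ (1 + 1 * ‖z‖) * ‖v‖ * gaussWeight z * C := by gcongr; linarith
      _ = _ := by ring
  rw [integral_inner_mul_gaussWeight_mul, abs_mul, abs_of_pos (by positivity)] at h1
  rw [le_div_iff₀ hs]
  field_simp at h1
  linarith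

/-- Gaussian averaging is a contraction of `L¹`. -/
lemma integral_abs_gaussAvg_le (s : ℝ) (f : 𝓢(V, ℝ)) :
    ∫ x, |gaussAvg s f x| ≤ ∫ x, |f x| := by
  have hcont : Continuous fun p : V × V => gaussWeight p.2 * |f (p.1 + s • p.2)| := by
    have := continuous_gaussWeight (V := V); fun_prop
  have hint : Integrable (fun p : V × V => gaussWeight p.2 * |f (p.1 + s • p.2)|)
      (volume.prod volume) := by
    rw [integrable_prod_iff' hcont.aestronglyMeasurable]
    constructor
    · exact .of_forall fun z =>
        ((f.integrable.comp_add_right (s • z)).abs).const_mul (gaussWeight z)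
    · have : ∀ z : V, ∫ x, ‖gaussWeight z * |f (x + s • z)|‖ = gaussWeight z * ∫ x, |f x| := by
        intro z
        simp only [norm_mul, Real.norm_of_nonneg (gaussWeight_pos z).le, integral_const_mul,
          Real.norm_eq_abs, abs_abs]
        rw [integral_add_right_eq_self (fun x => |f x|)]
      simp only [this]
      exact integrable_gaussWeight.mul_const _
  calc ∫ x, |gaussAvg s f x| ≤ ∫ x, ∫ z, gaussWeight z * |f (x + s • z)| := by
        refine integral_mono (integrable_gaussAvg s f).abs hint.integral_prod_left fun x => ?_
        simp only [gaussAvg]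
        rw [← Real.norm_eq_abs]
        refine (norm_integral_le_integral_norm _).trans_eq ?_
        simp only [norm_mul, Real.norm_of_nonneg (gaussWeight_pos _).le, Real.norm_eq_abs]
    _ = ∫ z, ∫ x, gaussWeight z * |f (x + s • z)| := integral_integral_swap hint
    _ = ∫ z, gaussWeight z * ∫ x, |f x| := by
        congr 1; ext z
        rw [integral_const_mul, integral_add_right_eq_self (fun x => |f x|)]
    _ = _ := by rw [integral_mul_const, integral_gaussWeight, one_mul]

end GaussianAverage

section Flow

/-- `b₁` and `b₂` are the partial derivatives of `b`, expressed by the chain rule along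
differentiable curves. -/
def HasPartials (b b₁ b₂ : ℝ → ℝ → ℝ) : Prop :=
  ∀ ⦃F G : ℝ → ℝ⦄ ⦃F' G' t : ℝ⦄, HasDerivAt F F' t → HasDerivAt G G' t →
    HasDerivAt (fun r => b (F r) (G r)) (b₁ (F t) (G t) * F' + b₂ (F t) (G t) * G') t

/-- A twice continuously differentiable function of two real variables, together with its
partial derivatives up to order two. -/
structure IsTwiceDiff (b b₁ b₂ b₁₁ b₁₂ b₂₂ : ℝ → ℝ → ℝ) : Prop where
  partials : HasPartials b b₁ b₂
  partials₁ : HasPartials b₁ b₁₁ b₁₂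
  partials₂ : HasPartials b₂ b₁₂ b₂₂
  cont : Continuous (Function.uncurry b)
  cont₁ : Continuous (Function.uncurry b₁)
  cont₂ : Continuous (Function.uncurry b₂)
  cont₁₁ : Continuous (Function.uncurry b₁₁)
  cont₁₂ : Continuous (Function.uncurry b₁₂)
  cont₂₂ : Continuous (Function.uncurry b₂₂)

lemma exists_bound_of_continuous {c : ℝ → ℝ → ℝ} (hc : Continuous (Function.uncurry c)) (R : ℝ) :
    ∃ M, 0 ≤ M ∧ ∀ x y, |x| ≤ R → |y| ≤ R → |c x y| ≤ M := by
  obtain ⟨M, hM⟩ := (isCompact_Icc (a := -R) (b := R)).prod (isCompact_Icc (a := -R) (b := R))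
    |>.exists_bound_of_continuousOn hc.continuousOn
  exact ⟨max M 0, le_max_right _ _, fun x y hx hy =>
    (hM (x, y) ⟨abs_le.1 hx, abs_le.1 hy⟩).trans (le_max_left _ _)⟩

/-- A function vanishing at the origin with continuous partial derivatives grows at most linearly
on bounded sets. -/
lemma HasPartials.exists_linear_bound {b b₁ b₂ : ℝ → ℝ → ℝ} (h : HasPartials b b₁ b₂)
    (h₁ : Continuous (Function.uncurry b₁)) (h₂ : Continuous (Function.uncurry b₂))
    (h0 : b 0 0 = 0) (R : ℝ) :
    ∃ M, 0 ≤ M ∧ ∀ x y, |x| ≤ R → |y| ≤ R → |b x y| ≤ M * (|x| + |y|) := by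
  obtain ⟨M₁, hM₁, hb₁⟩ := exists_bound_of_continuous h₁ R
  obtain ⟨M₂, hM₂, hb₂⟩ := exists_bound_of_continuous h₂ R
  refine ⟨M₁ + M₂, by positivity, fun x y hx hy => ?_⟩
  have hd : ∀ r : ℝ, HasDerivAt (fun r => b (r * x) (r * y))
      (b₁ (r * x) (r * y) * x + b₂ (r * x) (r * y) * y) r := fun r => by
    have e1 : HasDerivAt (fun r => r * x) x r := by simpa using (hasDerivAt_id r).mul_const x
    have e2 : HasDerivAt (fun r => r * y) y r := by simpa using (hasDerivAt_id r).mul_const y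
    exact h e1 e2
  have key := norm_image_sub_le_of_norm_deriv_le_segment_01' (C := (M₁ + M₂) * (|x| + |y|))
    (fun r _ => (hd r).hasDerivWithinAt) fun r hr => by
      have hr' : ∀ a, |a| ≤ R → |r * a| ≤ R := fun a ha => by
        rw [abs_mul, abs_of_nonneg hr.1]
        nlinarith [abs_nonneg a, hr.1, hr.2]
      calc _ ≤ |b₁ (r * x) (r * y)| * |x| + |b₂ (r * x) (r * y)| * |y| := by
            rw [Real.norm_eq_abs, ← abs_mul, ← abs_mul]; exact abs_add_le _ _
        _ ≤ M₁ * |x| + M₂ * |y| := by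
            gcongr
            · exact hb₁ _ _ (hr' x hx) (hr' y hy)
            · exact hb₂ _ _ (hr' x hx) (hr' y hy)
        _ ≤ _ := by nlinarith [abs_nonneg x, abs_nonneg y, mul_nonneg hM₁ (abs_nonneg y),
            mul_nonneg hM₂ (abs_nonneg x)]
  simpa [h0] using key

variable {V : Type*} [NormedAddCommGroup V] [InnerProductSpace ℝ V] [FiniteDimensional ℝ V]
  [MeasurableSpace V] [BorelSpace V]

lemma integrable_mul_gaussAvg {c : V → ℝ} (hc : Continuous c) {M : ℝ} (hM : ∀ x, |c x| ≤ M)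
    (s : ℝ) (f : 𝓢(V, ℝ)) : Integrable fun x => c x * gaussAvg s f x :=
  (integrable_gaussAvg s f).bdd_mul hc.aestronglyMeasurable (.of_forall hM)

/-- Integration by parts of a Gaussian average against a bounded function with bounded
derivative. -/
lemma integral_mul_gaussAvg_lineDeriv {c c' : V → ℝ} (hc : Continuous c) (hc' : Continuous c')
    {M M' : ℝ} (hM : ∀ x, |c x| ≤ M) (hM' : ∀ x, |c' x| ≤ M') {v : V}
    (hcc' : ∀ x, HasLineDerivAt ℝ c (c' x) x v) (s : ℝ) (f : 𝓢(V, ℝ)) :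
    ∫ x, c x * gaussAvg s (∂_{v} f) x = -∫ x, c' x * gaussAvg s f x :=
  integral_bilinear_hasLineDerivAt_right_eq_neg_left_of_integrable (μ := volume)
    (B := ContinuousLinearMap.mul ℝ ℝ) (integrable_mul_gaussAvg hc' hM' s f)
    (integrable_mul_gaussAvg hc hM s (∂_{v} f)) (integrable_mul_gaussAvg hc hM s f)
    (fun x _ => hcc' x) (fun x _ => hasLineDerivAt_gaussAvg s f x v)

/-- The Hessian of `b` at the Gaussian averages of `f` and `g`, evaluated on their derivatives in
the direction `v`. -/
def hessAlong (b₁₁ b₁₂ b₂₂ : ℝ → ℝ → ℝ) (s : ℝ) (f g : 𝓢(V, ℝ)) (v x : V) : ℝ :=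
  b₁₁ (gaussAvg s f x) (gaussAvg s g x) * gaussAvg s (∂_{v} f) x ^ 2
    + 2 * b₁₂ (gaussAvg s f x) (gaussAvg s g x) * gaussAvg s (∂_{v} f) x * gaussAvg s (∂_{v} g) x
    + b₂₂ (gaussAvg s f x) (gaussAvg s g x) * gaussAvg s (∂_{v} g) x ^ 2

lemma exists_gaussAvg_bound₂ (f g : 𝓢(V, ℝ)) :
    ∃ R, ∀ s x, |gaussAvg s f x| ≤ R ∧ |gaussAvg s g x| ≤ R := by
  obtain ⟨C, -, h⟩ := exists_gaussAvg_bound f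
  obtain ⟨C', -, h'⟩ := exists_gaussAvg_bound g
  exact ⟨max C C', fun s x => ⟨(h s x).trans (le_max_left _ _), (h' s x).trans (le_max_right _ _)⟩⟩

lemma continuous_comp_gaussAvg {c : ℝ → ℝ → ℝ} (hc : Continuous (Function.uncurry c)) (s : ℝ)
    (f g : 𝓢(V, ℝ)) : Continuous fun x => c (gaussAvg s f x) (gaussAvg s g x) :=
  hc.comp ((continuous_gaussAvg s f).prodMk (continuous_gaussAvg s g))

lemma exists_comp_gaussAvg_bound {c : ℝ → ℝ → ℝ} (hc : Continuous (Function.uncurry c))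
    (f g : 𝓢(V, ℝ)) : ∃ M, 0 ≤ M ∧ ∀ s x, |c (gaussAvg s f x) (gaussAvg s g x)| ≤ M := by
  obtain ⟨R, hR⟩ := exists_gaussAvg_bound₂ f g
  obtain ⟨M, hM, h⟩ := exists_bound_of_continuous hc R
  exact ⟨M, hM, fun s x => h _ _ (hR s x).1 (hR s x).2⟩

lemma integrable_comp_mul_gaussAvg {c : ℝ → ℝ → ℝ} (hc : Continuous (Function.uncurry c)) (s : ℝ)
    (f g h : 𝓢(V, ℝ)) :
    Integrable fun x => c (gaussAvg s f x) (gaussAvg s g x) * gaussAvg s h x := by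
  obtain ⟨M, -, hM⟩ := exists_comp_gaussAvg_bound hc f g
  exact integrable_mul_gaussAvg (continuous_comp_gaussAvg hc s f g) (hM s) s h

lemma integrable_comp_mul_gaussAvg_mul_gaussAvg {c : ℝ → ℝ → ℝ}
    (hc : Continuous (Function.uncurry c)) (s : ℝ) (f g h k : 𝓢(V, ℝ)) :
    Integrable fun x =>
      c (gaussAvg s f x) (gaussAvg s g x) * gaussAvg s h x * gaussAvg s k x := by
  obtain ⟨M, hM0, hM⟩ := exists_comp_gaussAvg_bound hc f g
  obtain ⟨C, hC0, hC⟩ := exists_gaussAvg_bound h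
  refine integrable_mul_gaussAvg (M := M * C)
    ((continuous_comp_gaussAvg hc s f g).mul (continuous_gaussAvg s h)) (fun x => ?_) s k
  simp only [Pi.mul_apply]
  rw [abs_mul]
  have := hM s x
  have := hC s x
  gcongr

lemma integrable_gaussAvg_mul_gaussAvg (s : ℝ) (f g : 𝓢(V, ℝ)) :
    Integrable fun x => gaussAvg s f x * gaussAvg s g x := by
  obtain ⟨C, -, hC⟩ := exists_gaussAvg_bound f
  exact integrable_mul_gaussAvg (continuous_gaussAvg s f) (hC s) s g

lemma integral_gaussAvg_mul_gaussAvg_lineDeriv (s : ℝ) (f g : 𝓢(V, ℝ)) (v : V) :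
    ∫ x, gaussAvg s f x * gaussAvg s (∂_{v} g) x
      = -∫ x, gaussAvg s (∂_{v} f) x * gaussAvg s g x := by
  obtain ⟨C, -, hC⟩ := exists_gaussAvg_bound f
  obtain ⟨C', -, hC'⟩ := exists_gaussAvg_bound (∂_{v} f)
  exact integral_mul_gaussAvg_lineDeriv (continuous_gaussAvg s f) (continuous_gaussAvg s _)
    (hC s) (hC' s) (fun x => hasLineDerivAt_gaussAvg s f x v) s g

variable {b b₁ b₂ b₁₁ b₁₂ b₂₂ : ℝ → ℝ → ℝ}

lemma IsTwiceDiff.integrable_comp_gaussAvg (hb : IsTwiceDiff b b₁ b₂ b₁₁ b₁₂ b₂₂)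
    (h0 : b 0 0 = 0) (s : ℝ) (f g : 𝓢(V, ℝ)) :
    Integrable fun x => b (gaussAvg s f x) (gaussAvg s g x) := by
  obtain ⟨R, hR⟩ := exists_gaussAvg_bound₂ f g
  obtain ⟨M, hM, h⟩ := hb.partials.exists_linear_bound hb.cont₁ hb.cont₂ h0 R
  exact (((integrable_gaussAvg s f).abs.add (integrable_gaussAvg s g).abs).const_mul M).mono'
    (continuous_comp_gaussAvg hb.cont s f g).aestronglyMeasurable
    (.of_forall fun x => h _ _ (hR s x).1 (hR s x).2)

lemma IsTwiceDiff.integrable_hessAlong (hb : IsTwiceDiff b b₁ b₂ b₁₁ b₁₂ b₂₂)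
    (s : ℝ) (f g : 𝓢(V, ℝ)) (v : V) : Integrable (hessAlong b₁₁ b₁₂ b₂₂ s f g v) := by
  have h1 := integrable_comp_mul_gaussAvg_mul_gaussAvg hb.cont₁₁ s f g (∂_{v} f) (∂_{v} f)
  have h2 := integrable_comp_mul_gaussAvg_mul_gaussAvg hb.cont₁₂ s f g (∂_{v} f) (∂_{v} g)
  have h3 := integrable_comp_mul_gaussAvg_mul_gaussAvg hb.cont₂₂ s f g (∂_{v} g) (∂_{v} g)
  refine ((h1.add (h2.const_mul 2)).add h3).congr (.of_forall fun x => ?_)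
  simp only [hessAlong, Pi.add_apply]
  ring

/-- Integration by parts turns second derivatives into the Hessian of `b`. -/
lemma IsTwiceDiff.integral_add_eq_neg_hessAlong (hb : IsTwiceDiff b b₁ b₂ b₁₁ b₁₂ b₂₂)
    (s : ℝ) (f g : 𝓢(V, ℝ)) (v : V) :
    ∫ x, (b₁ (gaussAvg s f x) (gaussAvg s g x) * gaussAvg s (∂_{v} (∂_{v} f)) x
        + b₂ (gaussAvg s f x) (gaussAvg s g x) * gaussAvg s (∂_{v} (∂_{v} g)) x)
      = -∫ x, hessAlong b₁₁ b₁₂ b₂₂ s f g v x := by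
  have ibp : ∀ {c c₁ c₂ : ℝ → ℝ → ℝ}, HasPartials c c₁ c₂ → Continuous (Function.uncurry c) →
      Continuous (Function.uncurry c₁) → Continuous (Function.uncurry c₂) → ∀ h : 𝓢(V, ℝ),
      ∫ x, c (gaussAvg s f x) (gaussAvg s g x) * gaussAvg s (∂_{v} h) x
        = -∫ x, (c₁ (gaussAvg s f x) (gaussAvg s g x) * gaussAvg s (∂_{v} f) x
            + c₂ (gaussAvg s f x) (gaussAvg s g x) * gaussAvg s (∂_{v} g) x) * gaussAvg s h x := by
    intro c c₁ c₂ hc k k₁ k₂ h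
    obtain ⟨M, -, hM⟩ := exists_comp_gaussAvg_bound k f g
    obtain ⟨M₁, hM₁0, hM₁⟩ := exists_comp_gaussAvg_bound k₁ f g
    obtain ⟨M₂, hM₂0, hM₂⟩ := exists_comp_gaussAvg_bound k₂ f g
    obtain ⟨C₁, -, hC₁⟩ := exists_gaussAvg_bound (∂_{v} f)
    obtain ⟨C₂, -, hC₂⟩ := exists_gaussAvg_bound (∂_{v} g)
    refine integral_mul_gaussAvg_lineDeriv (M := M) (M' := M₁ * C₁ + M₂ * C₂)
      (continuous_comp_gaussAvg k s f g)
      (((continuous_comp_gaussAvg k₁ s f g).mul (continuous_gaussAvg s _)).add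
        ((continuous_comp_gaussAvg k₂ s f g).mul (continuous_gaussAvg s _)))
      (hM s) (fun x => ?_) (fun x => ?_) s h
    · refine (abs_add_le _ _).trans ?_
      simp only [Pi.mul_apply]
      rw [abs_mul, abs_mul]
      have := hM₁ s x
      have := hM₂ s x
      have := hC₁ s x
      have := hC₂ s x
      gcongr
    · have := hc (hasLineDerivAt_gaussAvg s f x v) (hasLineDerivAt_gaussAvg s g x v)
      simpa [HasLineDerivAt] using this
  rw [integral_add (integrable_comp_mul_gaussAvg hb.cont₁ s f g _)
    (integrable_comp_mul_gaussAvg hb.cont₂ s f g _),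
    ibp hb.partials₁ hb.cont₁ hb.cont₁₁ hb.cont₁₂, ibp hb.partials₂ hb.cont₂ hb.cont₁₂ hb.cont₂₂,
    ← neg_add, ← integral_add]
  · congr 2
    ext x
    simp only [hessAlong]
    ring
  · simp only [add_mul]
    exact (integrable_comp_mul_gaussAvg_mul_gaussAvg hb.cont₁₁ s f g _ _).add
      (integrable_comp_mul_gaussAvg_mul_gaussAvg hb.cont₁₂ s f g _ _)
  · simp only [add_mul]
    exact (integrable_comp_mul_gaussAvg_mul_gaussAvg hb.cont₁₂ s f g _ _).add
      (integrable_comp_mul_gaussAvg_mul_gaussAvg hb.cont₂₂ s f g _ _)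

/-- The derivative along the heat flow of the integral of a function of two solutions. -/
lemma IsTwiceDiff.hasDerivAt_integral_comp_gaussAvg (hb : IsTwiceDiff b b₁ b₂ b₁₁ b₁₂ b₂₂)
    (h0 : b 0 0 = 0) (f g : 𝓢(V, ℝ)) {ι : Type*} [Fintype ι] (e : OrthonormalBasis ι ℝ V) (s : ℝ) :
    HasDerivAt (fun r => ∫ x, b (gaussAvg r f x) (gaussAvg r g x))
      (-(s / (2 * Real.pi)) * ∑ j, ∫ x, hessAlong b₁₁ b₁₂ b₂₂ s f g (e j) x) s := by
  obtain ⟨M₁, hM₁0, hM₁⟩ := exists_comp_gaussAvg_bound hb.cont₁ f g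
  obtain ⟨M₂, hM₂0, hM₂⟩ := exists_comp_gaussAvg_bound hb.cont₂ f g
  have hS : 0 ≤ |s| + 1 := by positivity
  set m := Module.finrank ℝ V + 1
  obtain ⟨C₁, hC₁0, hC₁⟩ := exists_gaussAvg_decay (Δ f) m hS
  obtain ⟨C₂, hC₂0, hC₂⟩ := exists_gaussAvg_decay (Δ g) m hS
  have hpi := Real.pi_pos
  have hF' : ∀ r x, b₁ (gaussAvg r f x) (gaussAvg r g x) * (r / (2 * Real.pi) * gaussAvg r (Δ f) x)
        + b₂ (gaussAvg r f x) (gaussAvg r g x) * (r / (2 * Real.pi) * gaussAvg r (Δ g) x)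
      = r / (2 * Real.pi) * (b₁ (gaussAvg r f x) (gaussAvg r g x) * gaussAvg r (Δ f) x
        + b₂ (gaussAvg r f x) (gaussAvg r g x) * gaussAvg r (Δ g) x) := fun r x => by ring
  have key := (hasDerivAt_integral_of_dominated_loc_of_deriv_le (μ := volume) (𝕜 := ℝ)
    (F := fun r x => b (gaussAvg r f x) (gaussAvg r g x))
    (F' := fun r x =>
      b₁ (gaussAvg r f x) (gaussAvg r g x) * (r / (2 * Real.pi) * gaussAvg r (Δ f) x)
        + b₂ (gaussAvg r f x) (gaussAvg r g x) * (r / (2 * Real.pi) * gaussAvg r (Δ g) x))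
    (x₀ := s) (s := Metric.ball s 1)
    (bound := fun x : V => (|s| + 1) / (2 * Real.pi) * (M₁ * C₁ + M₂ * C₂) * ((1 + ‖x‖) ^ m)⁻¹)
    (Metric.ball_mem_nhds s one_pos)
    (.of_forall fun t => (hb.integrable_comp_gaussAvg h0 t f g).aestronglyMeasurable)
    (hb.integrable_comp_gaussAvg h0 s f g) ?_
    (.of_forall fun x t ht => ?_)
    (integrable_inv_one_add_norm_pow.const_mul _)
    (.of_forall fun x t _ =>
      hb.partials (hasDerivAt_gaussAvg t f x) (hasDerivAt_gaussAvg t g x))).2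
  · convert! key using 1
    simp only [hF', integral_const_mul]
    rw [neg_mul, ← mul_neg, ← Finset.sum_neg_distrib]
    congr 1
    simp only [← hb.integral_add_eq_neg_hessAlong]
    have hint : ∀ j, Integrable fun x =>
        b₁ (gaussAvg s f x) (gaussAvg s g x) * gaussAvg s (∂_{e j} (∂_{e j} f)) x
          + b₂ (gaussAvg s f x) (gaussAvg s g x) * gaussAvg s (∂_{e j} (∂_{e j} g)) x := fun j =>
      (integrable_comp_mul_gaussAvg hb.cont₁ s f g _).add
        (integrable_comp_mul_gaussAvg hb.cont₂ s f g _)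
    rw [← integral_finsetSum _ fun j _ => hint j]
    simp only [SchwartzMap.laplacian_eq_sum e, gaussAvg_sum, Finset.mul_sum,
      Finset.sum_add_distrib]
  · simp only [hF']
    exact (((integrable_comp_mul_gaussAvg hb.cont₁ s f g _).add
      (integrable_comp_mul_gaussAvg hb.cont₂ s f g _)).const_mul _).aestronglyMeasurable
  · have ht' : |t| ≤ |s| + 1 := by
      have h1 : |t - s| < 1 := by simpa [Real.dist_eq] using ht
      have h2 : |t| ≤ |t - s| + |s| := by simpa using abs_add_le (t - s) s
      linarith
    have a1 := hM₁ t x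
    have a2 := hM₂ t x
    have a3 := hC₁ t ht' x
    have a4 := hC₂ t ht' x
    rw [hF', norm_mul, Real.norm_eq_abs, Real.norm_eq_abs, abs_div, abs_of_pos (by positivity :
      (0 : ℝ) < 2 * Real.pi), mul_assoc ((|s| + 1) / (2 * Real.pi))]
    gcongr
    refine (abs_add_le _ _).trans ?_
    rw [abs_mul, abs_mul, add_mul, mul_assoc, mul_assoc]
    gcongr

end Flow

section Bellman

/-! ### Closure properties of `IsTwiceDiff` -/

lemma HasPartials.swap {b b₁ b₂ : ℝ → ℝ → ℝ} (h : HasPartials b b₁ b₂) :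
    HasPartials (fun x y => b y x) (fun x y => b₂ y x) (fun x y => b₁ y x) := by
  intro F G F' G' t hF hG
  rw [add_comm]
  exact h hG hF

lemma IsTwiceDiff.swap {b b₁ b₂ b₁₁ b₁₂ b₂₂ : ℝ → ℝ → ℝ} (h : IsTwiceDiff b b₁ b₂ b₁₁ b₁₂ b₂₂) :
    IsTwiceDiff (fun x y => b y x) (fun x y => b₂ y x) (fun x y => b₁ y x) (fun x y => b₂₂ y x)
      (fun x y => b₁₂ y x) (fun x y => b₁₁ y x) where
  partials := h.partials.swap
  partials₁ := h.partials₂.swap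
  partials₂ := h.partials₁.swap
  cont := h.cont.comp continuous_swap
  cont₁ := h.cont₂.comp continuous_swap
  cont₂ := h.cont₁.comp continuous_swap
  cont₁₁ := h.cont₂₂.comp continuous_swap
  cont₁₂ := h.cont₁₂.comp continuous_swap
  cont₂₂ := h.cont₁₁.comp continuous_swap

/-- The product of the two variables, with its partial derivatives. -/
lemma isTwiceDiff_mul : IsTwiceDiff (fun x y => x * y) (fun _ y => y) (fun x _ => x)
    (fun _ _ => 0) (fun _ _ => 1) (fun _ _ => 0) where
  partials F G F' G' t hF hG := by
    have := hF.mul hG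
    convert! this using 1
    ring
  partials₁ F G F' G' t hF hG := by simpa using hG
  partials₂ F G F' G' t hF hG := by simpa using hF
  cont := by unfold Function.uncurry; fun_prop
  cont₁ := by unfold Function.uncurry; fun_prop
  cont₂ := by unfold Function.uncurry; fun_prop
  cont₁₁ := by unfold Function.uncurry; fun_prop
  cont₁₂ := by unfold Function.uncurry; fun_prop
  cont₂₂ := by unfold Function.uncurry; fun_prop

/-! ### Regularized powers -/

/-- A smooth regularization `(x² + ε²) ^ (r / 2)` of `|x| ^ r`. -/
def regPow (ε r x : ℝ) : ℝ := (x ^ 2 + ε ^ 2) ^ (r / 2)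

/-- The first derivative of `regPow`. -/
def regPow' (ε r x : ℝ) : ℝ := r * x * (x ^ 2 + ε ^ 2) ^ (r / 2 - 1)

/-- The second derivative of `regPow`. -/
def regPow'' (ε r x : ℝ) : ℝ :=
  r * (x ^ 2 + ε ^ 2) ^ (r / 2 - 1) + r * (r - 2) * x ^ 2 * (x ^ 2 + ε ^ 2) ^ (r / 2 - 1 - 1)

variable {ε : ℝ}

lemma hasDerivAt_regBase_rpow (hε : 0 < ε) (a x : ℝ) :
    HasDerivAt (fun x : ℝ => (x ^ 2 + ε ^ 2) ^ a) (2 * a * x * (x ^ 2 + ε ^ 2) ^ (a - 1)) x := by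
  have h1 : HasDerivAt (fun x : ℝ => x ^ 2 + ε ^ 2) (2 * x) x := by
    simpa using (hasDerivAt_pow 2 x).add_const (ε ^ 2)
  convert! h1.rpow_const (p := a) (Or.inl (by positivity)) using 1
  ring

lemma hasDerivAt_regPow (hε : 0 < ε) (r x : ℝ) :
    HasDerivAt (regPow ε r) (regPow' ε r x) x := by
  convert! hasDerivAt_regBase_rpow hε (r / 2) x using 1
  unfold regPow'
  ring

lemma hasDerivAt_regPow' (hε : 0 < ε) (r x : ℝ) :
    HasDerivAt (regPow' ε r) (regPow'' ε r x) x := by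
  have h := ((hasDerivAt_id x).const_mul r).mul (hasDerivAt_regBase_rpow hε (r / 2 - 1) x)
  convert! h using 1
  simp only [id]
  unfold regPow''
  ring

lemma continuous_regBase_rpow (hε : 0 < ε) (a : ℝ) :
    Continuous fun x : ℝ => (x ^ 2 + ε ^ 2) ^ a :=
  continuous_iff_continuousAt.2 fun x => (hasDerivAt_regBase_rpow hε a x).continuousAt

lemma continuous_regPow (hε : 0 < ε) (r : ℝ) : Continuous (regPow ε r) :=
  continuous_regBase_rpow hε _

lemma continuous_regPow' (hε : 0 < ε) (r : ℝ) : Continuous (regPow' ε r) :=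
  (continuous_const.mul continuous_id).mul (continuous_regBase_rpow hε _)

lemma continuous_regPow'' (hε : 0 < ε) (r : ℝ) : Continuous (regPow'' ε r) :=
  (continuous_const.mul (continuous_regBase_rpow hε _)).add
    ((continuous_const.mul (continuous_pow 2)).mul (continuous_regBase_rpow hε _))

lemma regPow_zero_le (hε : 0 < ε) {r : ℝ} (hr : 0 ≤ r) (x : ℝ) : regPow ε r 0 ≤ regPow ε r x := by
  unfold regPow
  have := sq_nonneg x
  exact Real.rpow_le_rpow (by positivity) (by linarith) (by positivity)

lemma regPow_zero (hε : 0 < ε) (r : ℝ) : regPow ε r 0 = ε ^ r := by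
  unfold regPow
  rw [zero_pow two_ne_zero, zero_add, ← Real.rpow_natCast ε 2, ← Real.rpow_mul hε.le]
  congr 1
  push_cast
  ring

lemma sq_rpow_half (x r : ℝ) : (x ^ 2) ^ (r / 2) = |x| ^ r := by
  rw [← sq_abs, ← Real.rpow_natCast, ← Real.rpow_mul (abs_nonneg x)]
  congr 1
  push_cast
  ring

lemma regPow_sub_le_of_le_two {q : ℝ} (hq : 0 < q) (hq2 : q ≤ 2) (y : ℝ) :
    regPow ε q y - regPow ε q 0 ≤ |y| ^ q := by
  have := Real.rpow_add_le_add_rpow (sq_nonneg y) (sq_nonneg ε) (p := q / 2) (by positivity)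
    (by linarith)
  unfold regPow
  rw [sq_rpow_half y] at this
  simp only [zero_pow two_ne_zero, zero_add]
  linarith

lemma regPow_sub_le_of_two_le (hε : 0 < ε) (hε1 : ε ≤ 1) {p : ℝ} (hp : 2 ≤ p) (x : ℝ) :
    regPow ε p x - regPow ε p 0 ≤ 2 ^ p * |x| ^ p + 2 ^ p * ε * |x| := by
  have hx := abs_nonneg x
  have h1 : regPow ε p x ≤ (|x| + ε) ^ p := by
    rw [← abs_of_nonneg (by positivity : 0 ≤ |x| + ε), ← sq_rpow_half]
    unfold regPow
    gcongr
    nlinarith [sq_abs x]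
  rw [regPow_zero hε]
  have h0 : (0 : ℝ) ≤ ε ^ p := by positivity
  rcases le_total ε |x| with h | h
  · have h2 : (|x| + ε) ^ p ≤ 2 ^ p * |x| ^ p := by
      rw [← Real.mul_rpow (by norm_num) hx]
      gcongr
      linarith
    have : 0 ≤ 2 ^ p * ε * |x| := by positivity
    linarith
  · have hc := (convexOn_rpow (p := p) (by linarith)).2 (Set.mem_Ici.2 hε.le)
      (Set.mem_Ici.2 (by positivity : 0 ≤ 2 * ε))
      (by rw [sub_nonneg, div_le_one hε]; exact h : 0 ≤ 1 - |x| / ε)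
      (by positivity : 0 ≤ |x| / ε) (by ring)
    have e1 : (1 - |x| / ε) • ε + (|x| / ε) • (2 * ε) = |x| + ε := by
      simp only [smul_eq_mul]
      field_simp
      ring
    rw [e1] at hc
    simp only [smul_eq_mul] at hc
    rw [Real.mul_rpow (by norm_num) hε.le] at hc
    have h3 : ε ^ p ≤ ε ^ 2 := by
      rw [← Real.rpow_natCast]
      exact Real.rpow_le_rpow_of_exponent_ge hε hε1 (by exact_mod_cast hp)
    have h4 : |x| / ε * (2 ^ p * ε ^ p) ≤ |x| / ε * (2 ^ p * ε ^ 2) := by gcongr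
    have h5 : |x| / ε * (2 ^ p * ε ^ 2) = 2 ^ p * ε * |x| := by
      field_simp
    have h6 : 0 ≤ |x| / ε * ε ^ p := by positivity
    have h7 : 0 ≤ 2 ^ p * |x| ^ p := by positivity
    nlinarith

lemma le_regPow''_of_two_le (hε : 0 < ε) {p : ℝ} (hp : 2 ≤ p) (x : ℝ) :
    p * (x ^ 2) ^ (p / 2 - 1) ≤ regPow'' ε p x := by
  have h1 : (x ^ 2) ^ (p / 2 - 1) ≤ (x ^ 2 + ε ^ 2) ^ (p / 2 - 1) := by
    apply Real.rpow_le_rpow (sq_nonneg x)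
    · nlinarith [sq_nonneg ε]
    · linarith
  have h2 : 0 ≤ p * (p - 2) * x ^ 2 * (x ^ 2 + ε ^ 2) ^ (p / 2 - 1 - 1) := by
    have : 0 ≤ p - 2 := by linarith
    positivity
  unfold regPow''
  nlinarith

lemma le_regPow''_of_le_two (hε : 0 < ε) {q : ℝ} (hq : 1 < q) (hq2 : q ≤ 2) (y : ℝ) :
    q * (q - 1) * (y ^ 2 + ε ^ 2) ^ (q / 2 - 1) ≤ regPow'' ε q y := by
  have hY : 0 < y ^ 2 + ε ^ 2 := by positivity
  unfold regPow''
  rw [Real.rpow_sub_one hY.ne' (q / 2 - 1)]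
  set Z := (y ^ 2 + ε ^ 2) ^ (q / 2 - 1)
  have hZ : 0 < Z := by positivity
  have h1 : y ^ 2 / (y ^ 2 + ε ^ 2) ≤ 1 := by
    rw [div_le_one hY]; nlinarith
  have h2 : q * (q - 2) * y ^ 2 * (Z / (y ^ 2 + ε ^ 2))
      = -(q * (2 - q) * Z * (y ^ 2 / (y ^ 2 + ε ^ 2))) := by ring
  have h3 : q * (2 - q) * Z * (y ^ 2 / (y ^ 2 + ε ^ 2)) ≤ q * (2 - q) * Z * 1 := by
    have : 0 ≤ 2 - q := by linarith
    gcongr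
  rw [h2]
  nlinarith

/-! ### The mixed term -/

/-- The factor `(y² + ε²) ^ (q - 2)`. -/
def mixWeight (ε q y : ℝ) : ℝ := (y ^ 2 + ε ^ 2) ^ (q - 2)

/-- The mixed term `√(x² Y + Y ^ q)` with `Y = y² + ε²`, comparable to `|x| |y| + |y| ^ q`. -/
def mixTerm (ε q x y : ℝ) : ℝ :=
  √((y ^ 2 + ε ^ 2) * (x ^ 2 + (y ^ 2 + ε ^ 2) * mixWeight ε q y))

/-- The partial derivative of `mixTerm` in `x`. -/
def mixTerm₁ (ε q x y : ℝ) : ℝ := x * (y ^ 2 + ε ^ 2) / mixTerm ε q x y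

/-- The partial derivative of `mixTerm` in `y`. -/
def mixTerm₂ (ε q x y : ℝ) : ℝ :=
  y * (x ^ 2 + q * ((y ^ 2 + ε ^ 2) * mixWeight ε q y)) / mixTerm ε q x y

/-- The second partial derivative of `mixTerm` in `x`. -/
def mixTerm₁₁ (ε q x y : ℝ) : ℝ :=
  (y ^ 2 + ε ^ 2) / mixTerm ε q x y - x ^ 2 * (y ^ 2 + ε ^ 2) ^ 2 / mixTerm ε q x y ^ 3

/-- The mixed second partial derivative of `mixTerm`. -/
def mixTerm₁₂ (ε q x y : ℝ) : ℝ :=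
  2 * x * y / mixTerm ε q x y - x * y * (y ^ 2 + ε ^ 2)
    * (x ^ 2 + q * ((y ^ 2 + ε ^ 2) * mixWeight ε q y)) / mixTerm ε q x y ^ 3

/-- The second partial derivative of `mixTerm` in `y`. -/
def mixTerm₂₂ (ε q x y : ℝ) : ℝ :=
  (x ^ 2 + q * ((y ^ 2 + ε ^ 2) * mixWeight ε q y)) / mixTerm ε q x y
    + 2 * q * (q - 1) * y ^ 2 * mixWeight ε q y / mixTerm ε q x y
    - y ^ 2 * (x ^ 2 + q * ((y ^ 2 + ε ^ 2) * mixWeight ε q y)) ^ 2 / mixTerm ε q x y ^ 3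

lemma mixWeight_pos (hε : 0 < ε) (q y : ℝ) : 0 < mixWeight ε q y := by
  unfold mixWeight; positivity

lemma mixTerm_pos (hε : 0 < ε) (q x y : ℝ) : 0 < mixTerm ε q x y := by
  have := mixWeight_pos hε q y
  unfold mixTerm; positivity

lemma mixTerm_sq (hε : 0 < ε) (q x y : ℝ) : mixTerm ε q x y ^ 2
    = (y ^ 2 + ε ^ 2) * (x ^ 2 + (y ^ 2 + ε ^ 2) * mixWeight ε q y) := by
  have := mixWeight_pos hε q y
  exact Real.sq_sqrt (by positivity)

lemma hasDerivAt_mixWeight (hε : 0 < ε) (q y : ℝ) : HasDerivAt (mixWeight ε q)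
    (2 * (q - 2) * y * mixWeight ε q y / (y ^ 2 + ε ^ 2)) y := by
  have hY : 0 < y ^ 2 + ε ^ 2 := by positivity
  have h := hasDerivAt_regBase_rpow hε (q - 2) y
  rw [Real.rpow_sub_one hY.ne'] at h
  unfold mixWeight
  convert! h using 1
  ring

lemma hasDerivAt_regBase_mul_mixWeight (hε : 0 < ε) (q y : ℝ) :
    HasDerivAt (fun y => (y ^ 2 + ε ^ 2) * mixWeight ε q y)
      (2 * (q - 1) * y * mixWeight ε q y) y := by
  have hY : 0 < y ^ 2 + ε ^ 2 := by positivity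
  have h1 : HasDerivAt (fun x : ℝ => x ^ 2 + ε ^ 2) (2 * y) y := by
    simpa using (hasDerivAt_pow 2 y).add_const (ε ^ 2)
  have h := h1.mul (hasDerivAt_mixWeight hε q y)
  convert! h using 1
  field_simp
  ring

lemma hasPartials_mixTerm (hε : 0 < ε) (q : ℝ) :
    HasPartials (mixTerm ε q) (mixTerm₁ ε q) (mixTerm₂ ε q) := by
  intro F G F' G' t hF hG
  have hW := mixWeight_pos hε q (G t)
  have hm := mixTerm_pos hε q (F t) (G t)
  have hY : HasDerivAt (fun r => G r ^ 2 + ε ^ 2) (2 * G t * G') t := by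
    simpa using (hG.pow 2).add_const (ε ^ 2)
  have hX : HasDerivAt (fun r => F r ^ 2) (2 * F t * F') t := by
    convert! hF.pow 2 using 1
    simp
  have h := (hY.mul (hX.add ((hasDerivAt_regBase_mul_mixWeight hε q (G t)).comp t hG))).sqrt
    (by simp only [Pi.mul_apply, Pi.add_apply, Function.comp_apply]; positivity)
  convert! h using 1
  simp only [Pi.mul_apply, Pi.add_apply, Function.comp_apply]
  change _ = _ / (2 * mixTerm ε q (F t) (G t))
  unfold mixTerm₁ mixTerm₂
  field_simp
  ring

lemma hasPartials_mixTerm₁ (hε : 0 < ε) (q : ℝ) :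
    HasPartials (mixTerm₁ ε q) (mixTerm₁₁ ε q) (mixTerm₁₂ ε q) := by
  intro F G F' G' t hF hG
  have hm := mixTerm_pos hε q (F t) (G t)
  have hY : HasDerivAt (fun r => G r ^ 2 + ε ^ 2) (2 * G t * G') t := by
    simpa using (hG.pow 2).add_const (ε ^ 2)
  have h := (hF.mul hY).div (hasPartials_mixTerm hε q hF hG) hm.ne'
  convert! h using 1
  simp only [Pi.mul_apply]
  unfold mixTerm₁ mixTerm₂ mixTerm₁₁ mixTerm₁₂
  field_simp
  ring

lemma hasPartials_mixTerm₂ (hε : 0 < ε) (q : ℝ) :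
    HasPartials (mixTerm₂ ε q) (mixTerm₁₂ ε q) (mixTerm₂₂ ε q) := by
  intro F G F' G' t hF hG
  have hm := mixTerm_pos hε q (F t) (G t)
  have hX : HasDerivAt (fun r => F r ^ 2) (2 * F t * F') t := by
    convert! hF.pow 2 using 1
    simp
  have h := (hG.mul (hX.add (((hasDerivAt_regBase_mul_mixWeight hε q (G t)).comp t hG).const_mul
    q))).div (hasPartials_mixTerm hε q hF hG) hm.ne'
  convert! h using 1
  simp only [Pi.mul_apply, Pi.add_apply, Function.comp_apply]
  unfold mixTerm₁ mixTerm₂ mixTerm₁₂ mixTerm₂₂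
  field_simp
  ring

lemma continuous_mixWeight (hε : 0 < ε) (q : ℝ) : Continuous (mixWeight ε q) :=
  continuous_regBase_rpow hε _

lemma continuous_mixTerm (hε : 0 < ε) (q : ℝ) :
    Continuous fun z : ℝ × ℝ => mixTerm ε q z.1 z.2 := by
  have := continuous_mixWeight hε q
  unfold mixTerm
  fun_prop

lemma isTwiceDiff_mixTerm (hε : 0 < ε) (q : ℝ) :
    IsTwiceDiff (mixTerm ε q) (mixTerm₁ ε q) (mixTerm₂ ε q) (mixTerm₁₁ ε q) (mixTerm₁₂ ε q)
      (mixTerm₂₂ ε q) := by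
  have hW := continuous_mixWeight hε q
  have hm := continuous_mixTerm hε q
  have hne : ∀ z : ℝ × ℝ, mixTerm ε q z.1 z.2 ≠ 0 := fun z => (mixTerm_pos hε q _ _).ne'
  have hne3 : ∀ z : ℝ × ℝ, mixTerm ε q z.1 z.2 ^ 3 ≠ 0 := fun z => pow_ne_zero 3 (hne z)
  refine ⟨hasPartials_mixTerm hε q, hasPartials_mixTerm₁ hε q, hasPartials_mixTerm₂ hε q, hm,
    ?_, ?_, ?_, ?_, ?_⟩
  · exact Continuous.div (by fun_prop) hm hne
  · exact Continuous.div (by fun_prop) hm hne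
  · exact (Continuous.div (by fun_prop) hm hne).sub (Continuous.div (by fun_prop) (hm.pow 3) hne3)
  · exact (Continuous.div (by fun_prop) hm hne).sub (Continuous.div (by fun_prop) (hm.pow 3) hne3)
  · exact ((Continuous.div (by fun_prop) hm hne).add (Continuous.div (by fun_prop) hm hne)).sub
      (Continuous.div (by fun_prop) (hm.pow 3) hne3)

lemma mixTerm₁₁_eq (hε : 0 < ε) (q x y : ℝ) : mixTerm₁₁ ε q x y
    = (y ^ 2 + ε ^ 2) ^ 3 * mixWeight ε q y / mixTerm ε q x y ^ 3 := by
  have hm := mixTerm_pos hε q x y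
  have hs := mixTerm_sq hε q x y
  unfold mixTerm₁₁
  rw [_root_.eq_div_iff (by positivity), sub_mul, div_mul_cancel₀ _ (by positivity),
    div_mul_eq_mul_div, div_sub' hm.ne', div_eq_iff hm.ne']
  linear_combination (y ^ 2 + ε ^ 2) * mixTerm ε q x y * hs

lemma mixTerm₁₁_nonneg (hε : 0 < ε) (q x y : ℝ) : 0 ≤ mixTerm₁₁ ε q x y := by
  have := mixTerm_pos hε q x y
  have := mixWeight_pos hε q y
  rw [mixTerm₁₁_eq hε]
  positivity

lemma abs_mixTerm₁₂_le (hε : 0 < ε) {q : ℝ} (hq : 1 < q) (hq2 : q ≤ 2) (x y : ℝ) :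
    |mixTerm₁₂ ε q x y| ≤ 1 := by
  have hm := mixTerm_pos hε q x y
  have hs := mixTerm_sq hε q x y
  have hW := mixWeight_pos hε q y
  set m := mixTerm ε q x y
  set P := mixWeight ε q y
  set Y := y ^ 2 + ε ^ 2 with hY
  have hY0 : 0 < Y := by positivity
  have e : mixTerm₁₂ ε q x y = x * y / m * ((Y * x ^ 2 + (2 - q) * (Y * (Y * P))) / m ^ 2) := by
    change 2 * x * y / m - x * y * Y * (x ^ 2 + q * (Y * P)) / m ^ 3 = _
    field_simp
    linear_combination 2 * x * y * hs
  have h1 : |x * y / m| ≤ 1 := by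
    rw [abs_div, abs_of_pos hm, div_le_one hm]
    apply abs_le_of_sq_le_sq _ hm.le
    rw [hs]
    have : 0 ≤ Y * (Y * P) := by positivity
    nlinarith [mul_nonneg (sq_nonneg x) (sq_nonneg ε)]
  have h2 : |(Y * x ^ 2 + (2 - q) * (Y * (Y * P))) / m ^ 2| ≤ 1 := by
    have h3 : 0 ≤ Y * (Y * P) := by positivity
    have h4 : 0 ≤ (2 - q) * (Y * (Y * P)) := mul_nonneg (by linarith) h3
    have h5 : 0 ≤ Y * x ^ 2 := by positivity
    rw [abs_of_nonneg (by positivity), div_le_one (by positivity), hs]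
    nlinarith
  rw [e, abs_mul]
  exact mul_le_one₀ h1 (abs_nonneg _) h2

lemma mixTerm₂₂_nonneg (hε : 0 < ε) {q : ℝ} (hq : 1 < q) (x y : ℝ) :
    0 ≤ mixTerm₂₂ ε q x y := by
  have hm := mixTerm_pos hε q x y
  have hs := mixTerm_sq hε q x y
  have hW := mixWeight_pos hε q y
  set m := mixTerm ε q x y
  set P := mixWeight ε q y
  set Y := y ^ 2 + ε ^ 2 with hY
  have hY0 : 0 < Y := by positivity
  have e : mixTerm₂₂ ε q x y = ((x ^ 2 + q * (Y * P) + 2 * q * (q - 1) * y ^ 2 * P)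
      * (Y * (x ^ 2 + Y * P)) - y ^ 2 * (x ^ 2 + q * (Y * P)) ^ 2) / m ^ 3 := by
    change (x ^ 2 + q * (Y * P)) / m + 2 * q * (q - 1) * y ^ 2 * P / m
      - y ^ 2 * (x ^ 2 + q * (Y * P)) ^ 2 / m ^ 3 = _
    rw [← hs]
    field_simp
  rw [e]
  apply div_nonneg _ (by positivity)
  have hc : 0 < Y * P := by positivity
  have hk : 0 < q - 1 := by linarith
  have split : (x ^ 2 + q * (Y * P) + 2 * q * (q - 1) * y ^ 2 * P) * (Y * (x ^ 2 + Y * P))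
        - y ^ 2 * (x ^ 2 + q * (Y * P)) ^ 2
      = ε ^ 2 * ((x ^ 2 + q * (Y * P)) * (x ^ 2 + Y * P))
        + y ^ 2 * ((q - 1) * (Y * P) * ((2 * q - 1) * x ^ 2 + q * (Y * P))) := by
    rw [show ε ^ 2 = Y - y ^ 2 by rw [hY]; ring]
    ring
  rw [split]
  have : 0 < 2 * q - 1 := by linarith
  positivity

/-- The mixed term is uniformly convex in `x` where `x² ≤ Y ^ (q - 1)`. -/
lemma le_mixTerm₁₁ (hε : 0 < ε) {q x y τ : ℝ} (hτ : 0 < τ) (hτP : τ ^ 2 * mixWeight ε q y = 1)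
    (h : x ^ 2 ≤ (y ^ 2 + ε ^ 2) * mixWeight ε q y) : 2 * τ ≤ 8 * mixTerm₁₁ ε q x y := by
  have hm := mixTerm_pos hε q x y
  have hs := mixTerm_sq hε q x y
  rw [mixTerm₁₁_eq hε]
  set m := mixTerm ε q x y
  set P := mixWeight ε q y
  set Y := y ^ 2 + ε ^ 2
  have hY0 : 0 < Y := by positivity
  have h1 : τ * m ≤ 3 / 2 * Y := by
    apply le_of_sq_le_sq _ (by positivity)
    rw [mul_pow, hs]
    have : Y * (x ^ 2 + Y * P) ≤ Y * (Y * P + Y * P) := by gcongr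
    have h2 : τ ^ 2 * (Y * (x ^ 2 + Y * P)) ≤ τ ^ 2 * (Y * (Y * P + Y * P)) := by gcongr
    have h3 : τ ^ 2 * (Y * (Y * P + Y * P)) = 2 * Y ^ 2 := by linear_combination 2 * Y ^ 2 * hτP
    nlinarith
  have h2 : (τ * m) ^ 3 ≤ (3 / 2 * Y) ^ 3 := by gcongr
  rw [← mul_div_assoc, le_div_iff₀ (by positivity)]
  have h3 : τ ^ 2 * (2 * τ * m ^ 3) ≤ τ ^ 2 * (8 * (Y ^ 3 * P)) := by
    have e : τ ^ 2 * (8 * (Y ^ 3 * P)) = 8 * Y ^ 3 := by linear_combination 8 * Y ^ 3 * hτP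
    have : 0 < Y ^ 3 := by positivity
    rw [e]
    nlinarith
  exact le_of_mul_le_mul_left h3 (by positivity)

lemma regPow_sq (hε : 0 < ε) (q y : ℝ) :
    regPow ε q y ^ 2 = (y ^ 2 + ε ^ 2) * ((y ^ 2 + ε ^ 2) * mixWeight ε q y) := by
  have hY : 0 < y ^ 2 + ε ^ 2 := by positivity
  unfold regPow mixWeight
  generalize y ^ 2 + ε ^ 2 = Y at hY ⊢
  rw [← mul_assoc, ← sq, ← Real.rpow_natCast, ← Real.rpow_mul hY.le, ← Real.rpow_natCast Y,
    ← Real.rpow_add hY]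
  congr 1
  push_cast
  ring

lemma regPow_nonneg (ε r x : ℝ) : 0 ≤ regPow ε r x := by unfold regPow; positivity

lemma regPow_le_mixTerm (hε : 0 < ε) (q x y : ℝ) : regPow ε q y ≤ mixTerm ε q x y := by
  apply le_of_sq_le_sq _ (mixTerm_pos hε q x y).le
  rw [mixTerm_sq hε, regPow_sq hε, mul_add]
  have : 0 ≤ (y ^ 2 + ε ^ 2) * x ^ 2 := by positivity
  linarith

lemma mixTerm_le (hε : 0 < ε) (q x y : ℝ) :
    mixTerm ε q x y ≤ |x| * (|y| + ε) + regPow ε q y := by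
  have := regPow_nonneg ε q y
  have hxy : 0 ≤ |x| * (|y| + ε) := by positivity
  apply le_of_sq_le_sq _ (by positivity)
  have h2 := regPow_sq hε q y
  rw [mixTerm_sq hε, mul_add, ← h2, add_sq, mul_pow, sq_abs, add_sq, sq_abs]
  have h3 : 0 ≤ x ^ 2 * (2 * |y| * ε) := by positivity
  have h4 : 0 ≤ 2 * (|x| * (|y| + ε)) * regPow ε q y := by positivity
  nlinarith

lemma mixTerm_zero (hε : 0 < ε) (q : ℝ) : mixTerm ε q 0 0 = regPow ε q 0 :=
  le_antisymm (by simpa using mixTerm_le hε q 0 0) (regPow_le_mixTerm hε q 0 0)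

/-! ### The Bellman function -/

/-- A nonnegative function of size `|x| ^ p + |y| ^ q` whose Hessian dominates the product of the
increments. -/
structure IsBellman (p q C ε : ℝ) (b b₁ b₂ b₁₁ b₁₂ b₂₂ : ℝ → ℝ → ℝ) : Prop where
  isTwiceDiff : IsTwiceDiff b b₁ b₂ b₁₁ b₁₂ b₂₂
  zero : b 0 0 = 0
  nonneg : ∀ x y, 0 ≤ b x y
  hess : ∀ x y, ∃ τ > 0, ∀ d₁ d₂ : ℝ,
    τ * d₁ ^ 2 + τ⁻¹ * d₂ ^ 2 ≤ b₁₁ x y * d₁ ^ 2 + 2 * b₁₂ x y * d₁ * d₂ + b₂₂ x y * d₂ ^ 2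
  le : ∀ x y, b x y ≤ C * (|x| ^ p + |y| ^ q) + C * ε * (|x| + |y|)

lemma IsBellman.swap {p q C : ℝ} {b b₁ b₂ b₁₁ b₁₂ b₂₂ : ℝ → ℝ → ℝ}
    (h : IsBellman p q C ε b b₁ b₂ b₁₁ b₁₂ b₂₂) :
    IsBellman q p C ε (fun x y => b y x) (fun x y => b₂ y x) (fun x y => b₁ y x)
      (fun x y => b₂₂ y x) (fun x y => b₁₂ y x) (fun x y => b₁₁ y x) where
  isTwiceDiff := h.isTwiceDiff.swap
  zero := h.zero
  nonneg x y := h.nonneg y x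
  hess x y := by
    obtain ⟨τ, hτ, H⟩ := h.hess y x
    refine ⟨τ⁻¹, inv_pos.2 hτ, fun d₁ d₂ => ?_⟩
    have := H d₂ d₁
    rw [inv_inv]
    linarith
  le x y := by
    have := h.le y x
    rwa [add_comm (|y| ^ p), add_comm |y|] at this

lemma quadratic_form_ge {α β γ τ d₁ d₂ : ℝ} (hτ : 0 < τ) (hα : 2 * τ ≤ α) (hβ : |β| ≤ 8)
    (hγ : 65 * τ⁻¹ ≤ γ) :
    τ * d₁ ^ 2 + τ⁻¹ * d₂ ^ 2 ≤ α * d₁ ^ 2 + 2 * β * d₁ * d₂ + γ * d₂ ^ 2 := by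
  have h1 : 2 * τ * d₁ ^ 2 ≤ α * d₁ ^ 2 := by gcongr
  have h2 : 65 * τ⁻¹ * d₂ ^ 2 ≤ γ * d₂ ^ 2 := by gcongr
  have h3 : 0 ≤ τ⁻¹ * (τ * d₁ + β * d₂) ^ 2 := by positivity
  have h4 : τ⁻¹ * (τ * d₁ + β * d₂) ^ 2
      = τ * d₁ ^ 2 + 2 * β * d₁ * d₂ + β ^ 2 * (τ⁻¹ * d₂ ^ 2) := by
    field_simp
    ring
  have h5 : β ^ 2 * (τ⁻¹ * d₂ ^ 2) ≤ 64 * (τ⁻¹ * d₂ ^ 2) := by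
    gcongr
    nlinarith [sq_abs β, abs_nonneg β]
  linarith

lemma exists_isBellman_of_two_le {p q : ℝ} (hpq : p.HolderConjugate q) (hp : 2 ≤ p) :
    ∃ C, 0 < C ∧ ∀ ε, 0 < ε → ε ≤ 1 → ∃ b b₁ b₂ b₁₁ b₁₂ b₂₂,
      IsBellman p q C ε b b₁ b₂ b₁₁ b₁₂ b₂₂ := by
  have hq1 : 1 < q := hpq.symm.lt
  have hmul : (p - 1) * (q - 1) = 1 := by linear_combination hpq.sub_one_mul_conj
  have hq2 : q ≤ 2 := by nlinarith
  have hqq : 0 < q * (q - 1) := mul_pos (by linarith) (by linarith)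
  obtain ⟨K, hK⟩ : ∃ K, K = 65 / (q * (q - 1)) := ⟨_, rfl⟩
  have hKq : K * (q * (q - 1)) = 65 := by rw [hK, div_mul_cancel₀ _ hqq.ne']
  have hK1 : 1 ≤ K := by
    rw [hK, one_le_div hqq]
    nlinarith
  have h2p : (1 : ℝ) ≤ 2 ^ p := Real.one_le_rpow (by norm_num) (by linarith)
  refine ⟨K * 2 ^ p + K + 16, by positivity, fun ε hε hε1 => ⟨
    fun x y => K * (regPow ε p x - regPow ε p 0) + K * (regPow ε q y - regPow ε q 0)
      + 8 * (mixTerm ε q x y - mixTerm ε q 0 0),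
    fun x y => K * regPow' ε p x + 8 * mixTerm₁ ε q x y,
    fun x y => K * regPow' ε q y + 8 * mixTerm₂ ε q x y,
    fun x y => K * regPow'' ε p x + 8 * mixTerm₁₁ ε q x y,
    fun x y => 8 * mixTerm₁₂ ε q x y,
    fun x y => K * regPow'' ε q y + 8 * mixTerm₂₂ ε q x y, ?_, by ring, fun x y => ?_,
    fun x y => ?_, fun x y => ?_⟩⟩
  · have hm := isTwiceDiff_mixTerm hε q
    have c := hm.cont
    have c₁ := hm.cont₁
    have c₂ := hm.cont₂
    have c₁₁ := hm.cont₁₁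
    have c₁₂ := hm.cont₁₂
    have c₂₂ := hm.cont₂₂
    unfold Function.uncurry at c c₁ c₂ c₁₁ c₁₂ c₂₂
    have := continuous_regPow hε p
    have := continuous_regPow hε q
    have := continuous_regPow' hε p
    have := continuous_regPow' hε q
    have := continuous_regPow'' hε p
    have := continuous_regPow'' hε q
    refine ⟨?_, ?_, ?_, ?_, ?_, ?_, ?_, ?_, ?_⟩
    · intro F G F' G' t hF hG
      have h := (((((hasDerivAt_regPow hε p (F t)).comp t hF).sub_const (regPow ε p 0)).const_mul
        K).add ((((hasDerivAt_regPow hε q (G t)).comp t hG).sub_const (regPow ε q 0)).const_mul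
        K)).add (((hm.partials hF hG).sub_const (mixTerm ε q 0 0)).const_mul 8)
      convert! h using 1
      ring
    · intro F G F' G' t hF hG
      have h := (((hasDerivAt_regPow' hε p (F t)).comp t hF).const_mul K).add
        ((hm.partials₁ hF hG).const_mul 8)
      convert! h using 1
      ring
    · intro F G F' G' t hF hG
      have h := (((hasDerivAt_regPow' hε q (G t)).comp t hG).const_mul K).add
        ((hm.partials₂ hF hG).const_mul 8)
      convert! h using 1
      ring
    all_goals unfold Function.uncurry; fun_prop
  · have h1 := regPow_zero_le hε (r := p) (by linarith) x
    have h2 := regPow_zero_le hε (r := q) (by linarith) y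
    have h3 := regPow_le_mixTerm hε q x y
    rw [mixTerm_zero hε]
    have h4 : 0 ≤ K * (regPow ε p x - regPow ε p 0) := mul_nonneg (by linarith) (by linarith)
    have h5 : 0 ≤ K * (regPow ε q y - regPow ε q 0) := mul_nonneg (by linarith) (by linarith)
    linarith
  · have hY : 0 < y ^ 2 + ε ^ 2 := by positivity
    have hτ : 0 < (y ^ 2 + ε ^ 2) ^ (1 - q / 2) := by positivity
    have hτP : ((y ^ 2 + ε ^ 2) ^ (1 - q / 2)) ^ 2 * mixWeight ε q y = 1 := by
      unfold mixWeight
      rw [← Real.rpow_natCast, ← Real.rpow_mul hY.le, ← Real.rpow_add hY]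
      convert! Real.rpow_zero (y ^ 2 + ε ^ 2) using 2
      push_cast
      ring
    have hx2 := le_regPow''_of_two_le hε hp x
    have hx0 : 0 ≤ p * (x ^ 2) ^ (p / 2 - 1) := by positivity
    refine ⟨(y ^ 2 + ε ^ 2) ^ (1 - q / 2), hτ, fun d₁ d₂ => quadratic_form_ge hτ ?_ ?_ ?_⟩
    · rcases le_total (x ^ 2) ((y ^ 2 + ε ^ 2) * mixWeight ε q y) with h | h
      · have h1 := le_mixTerm₁₁ hε hτ hτP h
        have h2 : 0 ≤ K * regPow'' ε p x := mul_nonneg (by linarith) (by linarith)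
        linarith
      · have h1 := mixTerm₁₁_nonneg hε q x y
        have h2 : (y ^ 2 + ε ^ 2) ^ (1 - q / 2) ≤ (x ^ 2) ^ (p / 2 - 1) := by
          have e1 : (y ^ 2 + ε ^ 2) * mixWeight ε q y = (y ^ 2 + ε ^ 2) ^ (q - 1) := by
            unfold mixWeight
            nth_rewrite 1 [← Real.rpow_one (y ^ 2 + ε ^ 2)]
            rw [← Real.rpow_add hY]
            congr 1
            ring
          have e2 : (y ^ 2 + ε ^ 2) ^ (1 - q / 2)
              = ((y ^ 2 + ε ^ 2) ^ (q - 1)) ^ (p / 2 - 1) := by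
            rw [← Real.rpow_mul hY.le]
            congr 1
            linear_combination -hmul / 2
          rw [e2, ← e1]
          have := mixWeight_pos hε q y
          exact Real.rpow_le_rpow (by positivity) h (by linarith)
        have h3 : 2 * (x ^ 2) ^ (p / 2 - 1) ≤ p * (x ^ 2) ^ (p / 2 - 1) := by gcongr
        have h4 : 1 * regPow'' ε p x ≤ K * regPow'' ε p x := by
          have : 0 ≤ regPow'' ε p x := by linarith
          gcongr
        linarith
    · rw [abs_mul, abs_of_pos (by norm_num : (0 : ℝ) < 8)]
      linarith [abs_mixTerm₁₂_le hε hq1 hq2 x y]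
    · have h1 := le_regPow''_of_le_two hε hq1 hq2 y
      have h2 := mixTerm₂₂_nonneg hε hq1 x y
      have e : ((y ^ 2 + ε ^ 2) ^ (1 - q / 2))⁻¹ = (y ^ 2 + ε ^ 2) ^ (q / 2 - 1) := by
        rw [← Real.rpow_neg hY.le, neg_sub]
      have h3 : K * (q * (q - 1) * (y ^ 2 + ε ^ 2) ^ (q / 2 - 1)) ≤ K * regPow'' ε q y := by
        gcongr
      rw [← mul_assoc, hKq, ← e] at h3
      linarith
  · have h1 := regPow_sub_le_of_two_le hε hε1 hp x
    have h2 := regPow_sub_le_of_le_two (ε := ε) (by linarith) hq2 y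
    have h3 := mixTerm_le hε q x y
    have h4 := Real.young_inequality_of_nonneg (abs_nonneg x) (abs_nonneg y) hpq
    have hxp : 0 ≤ |x| ^ p := by positivity
    have hyq : 0 ≤ |y| ^ q := by positivity
    have h5 : |x| ^ p / p ≤ |x| ^ p := div_le_self hxp (by linarith)
    have h6 : |y| ^ q / q ≤ |y| ^ q := div_le_self hyq (by linarith)
    rw [mixTerm_zero hε]
    have h7 : K * (regPow ε p x - regPow ε p 0) ≤ K * (2 ^ p * |x| ^ p + 2 ^ p * ε * |x|) := by
      gcongr
    have h8 : K * (regPow ε q y - regPow ε q 0) ≤ K * |y| ^ q := by gcongr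
    have h9 : 0 ≤ ε * |x| := by positivity
    have h10 : 0 ≤ ε * |y| := by positivity
    have h11 : 0 ≤ K * |x| ^ p := by positivity
    have h12 : 0 ≤ K * 2 ^ p * |y| ^ q := by positivity
    have h13 : 0 ≤ K * (ε * |x|) := by positivity
    have h14 : 0 ≤ (K * 2 ^ p + K + 16) * (ε * |y|) := by positivity
    nlinarith

/-- Existence of Bellman functions for every pair of conjugate exponents. -/
lemma exists_isBellman {p q : ℝ} (hpq : p.HolderConjugate q) :
    ∃ C, 0 < C ∧ ∀ ε, 0 < ε → ε ≤ 1 → ∃ b b₁ b₂ b₁₁ b₁₂ b₂₂,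
      IsBellman p q C ε b b₁ b₂ b₁₁ b₁₂ b₂₂ := by
  rcases le_total 2 p with hp | hp
  · exact exists_isBellman_of_two_le hpq hp
  · have hq : 2 ≤ q := by
      have hmul : (p - 1) * (q - 1) = 1 := by linear_combination hpq.sub_one_mul_conj
      have h1 := hpq.lt
      have h2 := hpq.symm.lt
      nlinarith
    obtain ⟨C, hC, h⟩ := exists_isBellman_of_two_le hpq.symm hq
    refine ⟨C, hC, fun ε hε hε1 => ?_⟩
    obtain ⟨b, b₁, b₂, b₁₁, b₁₂, b₂₂, hb⟩ := h ε hε hε1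
    exact ⟨_, _, _, _, _, _, hb.swap⟩

end Bellman

section Riesz

set_option linter.unusedSectionVars false

variable {V : Type*} [NormedAddCommGroup V] [InnerProductSpace ℝ V] [FiniteDimensional ℝ V]
  [MeasurableSpace V] [BorelSpace V]

/-- Directional derivatives of Schwartz functions commute. -/
lemma SchwartzMap.lineDerivOp_lineDerivOp_comm (f : 𝓢(V, ℝ)) (v w : V) :
    ∂_{v} (∂_{w} f) = ∂_{w} (∂_{v} f) := by
  have key : ∀ (v w x : V), (∂_{v} (∂_{w} f)) x = fderiv ℝ (fderiv ℝ f) x v w := by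
    intro v w x
    have hd : DifferentiableAt ℝ (fderiv ℝ f) x :=
      ((f.smooth 2).fderiv_right (m := 1) (by norm_num)).differentiable (by norm_num) x
    have h1 : ((∂_{w} f : 𝓢(V, ℝ)) : V → ℝ) = fun y => fderiv ℝ f y w := by
      ext y; rw [SchwartzMap.lineDerivOp_apply_eq_fderiv]
    rw [SchwartzMap.lineDerivOp_apply_eq_fderiv, h1, fderiv_clm_apply hd (by fun_prop)]
    simp
  ext x
  rw [key, key]
  exact ((f.smooth 2).contDiffAt (x := x)).isSymmSndFDerivAt (by simp) v w

lemma SchwartzMap.laplacian_lineDerivOp {ι : Type*} [Fintype ι] (e : OrthonormalBasis ι ℝ V)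
    (f : 𝓢(V, ℝ)) (v : V) : Δ (∂_{v} f) = ∂_{v} (Δ f) := by
  rw [SchwartzMap.laplacian_eq_sum e, SchwartzMap.laplacian_eq_sum e, LineDeriv.lineDerivOp_sum]
  refine Finset.sum_congr rfl fun j _ => ?_
  rw [f.lineDerivOp_lineDerivOp_comm (e j) v, lineDerivOp_lineDerivOp_comm]

variable {ι : Type*} [Fintype ι] {e : OrthonormalBasis ι ℝ V}

/-- Integration by parts moves the derivative in `∂ᵢφ` onto the test function and replaces the
Laplacian of `φ` by the divergence of `w`. -/
lemma sum_integral_hessAlong_mul {φ : 𝓢(V, ℝ)} {w : ι → 𝓢(V, ℝ)}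
    (hw : ∑ k, ∂_{e k} (w k) = Δ φ) (i : ι) (g : 𝓢(V, ℝ)) (s : ℝ) :
    ∑ j, ∫ x, hessAlong (fun _ _ => 0) (fun _ _ => 1) (fun _ _ => 0) s (∂_{e i} φ) g (e j) x
      = ∑ k, ∫ x, 2 * (gaussAvg s (∂_{e k} (w k)) x * gaussAvg s (∂_{e i} g) x) := by
  have h1 : ∀ j, ∫ x, hessAlong (fun _ _ => 0) (fun _ _ => 1) (fun _ _ => 0) s (∂_{e i} φ) g
      (e j) x = -(2 * ∫ x, gaussAvg s (∂_{e j} (∂_{e j} (∂_{e i} φ))) x * gaussAvg s g x) := by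
    intro j
    rw [← mul_neg, ← integral_gaussAvg_mul_gaussAvg_lineDeriv, ← integral_const_mul]
    congr 1
    ext x
    simp only [hessAlong]
    ring
  have h2 : ∑ j, ∫ x, gaussAvg s (∂_{e j} (∂_{e j} (∂_{e i} φ))) x * gaussAvg s g x
      = ∫ x, gaussAvg s (∂_{e i} (Δ φ)) x * gaussAvg s g x := by
    rw [← SchwartzMap.laplacian_lineDerivOp e, SchwartzMap.laplacian_eq_sum e]
    simp only [gaussAvg_sum, Finset.sum_mul]
    rw [integral_finsetSum _ fun j _ => integrable_gaussAvg_mul_gaussAvg s _ g]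
  have h3 : ∫ x, gaussAvg s (Δ φ) x * gaussAvg s (∂_{e i} g) x
      = ∑ k, ∫ x, gaussAvg s (∂_{e k} (w k)) x * gaussAvg s (∂_{e i} g) x := by
    rw [← hw]
    simp only [gaussAvg_sum, Finset.sum_mul]
    rw [integral_finsetSum _ fun j _ => integrable_gaussAvg_mul_gaussAvg s _ _]
  simp only [h1, integral_const_mul, Finset.sum_neg_distrib, ← Finset.mul_sum]
  rw [h2, ← h3, integral_gaussAvg_mul_gaussAvg_lineDeriv]
  ring

/-- The Bellman function method: the pairing of `∂ᵢφ` with `g` is dominated by the integrals of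
the Bellman function at `w k` and `g`. -/
lemma IsBellman.integral_mul_le {p q C ε : ℝ} {b b₁ b₂ b₁₁ b₁₂ b₂₂ : ℝ → ℝ → ℝ}
    (hb : IsBellman p q C ε b b₁ b₂ b₁₁ b₁₂ b₂₂) {φ : 𝓢(V, ℝ)} {w : ι → 𝓢(V, ℝ)}
    (hw : ∑ k, ∂_{e k} (w k) = Δ φ) (i : ι) (g : 𝓢(V, ℝ)) :
    ∫ x, (∂_{e i} φ) x * g x ≤ ∑ k, ∫ x, b (w k x) (g x) := by
  set J : ℝ → ℝ := fun r => (∑ k, ∫ x, b (gaussAvg r (w k) x) (gaussAvg r g x))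
    - ∫ x, gaussAvg r (∂_{e i} φ) x * gaussAvg r g x with hJ
  have hJ' : ∀ s, HasDerivAt J
      ((∑ k, -(s / (2 * Real.pi)) * ∑ j, ∫ x, hessAlong b₁₁ b₁₂ b₂₂ s (w k) g (e j) x)
        - -(s / (2 * Real.pi)) * ∑ j, ∫ x, hessAlong (fun _ _ => 0) (fun _ _ => 1) (fun _ _ => 0)
          s (∂_{e i} φ) g (e j) x) s := fun s =>
    (HasDerivAt.fun_sum fun k _ =>
      hb.isTwiceDiff.hasDerivAt_integral_comp_gaussAvg hb.zero (w k) g e s).sub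
      (isTwiceDiff_mul.hasDerivAt_integral_comp_gaussAvg (by ring) (∂_{e i} φ) g e s)
  have hneg : ∀ s, 0 ≤ s → deriv J s ≤ 0 := by
    intro s hs
    rw [(hJ' s).deriv, ← Finset.mul_sum, ← mul_sub, neg_mul, neg_nonpos]
    refine mul_nonneg (by positivity) ?_
    rw [sum_integral_hessAlong_mul hw, sub_nonneg]
    refine Finset.sum_le_sum fun k _ => ?_
    rw [← integral_finsetSum _ fun j _ => hb.isTwiceDiff.integrable_hessAlong s (w k) g (e j)]
    refine integral_mono ((integrable_gaussAvg_mul_gaussAvg s _ _).const_mul 2)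
      (integrable_finsetSum _ fun j _ => hb.isTwiceDiff.integrable_hessAlong s (w k) g (e j))
      fun x => ?_
    obtain ⟨τ, hτ, H⟩ := hb.hess (gaussAvg s (w k) x) (gaussAvg s g x)
    have h1 : ∑ j, (τ * gaussAvg s (∂_{e j} (w k)) x ^ 2 + τ⁻¹ * gaussAvg s (∂_{e j} g) x ^ 2)
        ≤ ∑ j, hessAlong b₁₁ b₁₂ b₂₂ s (w k) g (e j) x :=
      Finset.sum_le_sum fun j _ => H _ _
    have h2 : τ * gaussAvg s (∂_{e k} (w k)) x ^ 2
        ≤ ∑ j, τ * gaussAvg s (∂_{e j} (w k)) x ^ 2 :=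
      Finset.single_le_sum (f := fun j => τ * gaussAvg s (∂_{e j} (w k)) x ^ 2)
        (fun j _ => by positivity) (Finset.mem_univ k)
    have h3 : τ⁻¹ * gaussAvg s (∂_{e i} g) x ^ 2 ≤ ∑ j, τ⁻¹ * gaussAvg s (∂_{e j} g) x ^ 2 :=
      Finset.single_le_sum (f := fun j => τ⁻¹ * gaussAvg s (∂_{e j} g) x ^ 2)
        (fun j _ => by positivity) (Finset.mem_univ i)
    rw [Finset.sum_add_distrib] at h1
    set α := gaussAvg s (∂_{e k} (w k)) x
    set β := gaussAvg s (∂_{e i} g) x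
    have h4 : 0 ≤ τ⁻¹ * (τ * α - β) ^ 2 := by positivity
    have h5 : τ⁻¹ * (τ * α - β) ^ 2 = τ * α ^ 2 - 2 * (α * β) + τ⁻¹ * β ^ 2 := by
      field_simp
      ring
    simp only
    linarith
  have hanti : AntitoneOn J (Set.Ici 0) :=
    antitoneOn_of_deriv_nonpos (convex_Ici 0)
      (fun s _ => (hJ' s).continuousAt.continuousWithinAt)
      (fun s _ => (hJ' s).differentiableAt.differentiableWithinAt)
      fun s hs => hneg s (by rw [interior_Ici] at hs; exact (Set.mem_Ioi.1 hs).le)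
  obtain ⟨D, hD, hDb⟩ := exists_abs_gaussAvg_lineDeriv_le φ (e i)
  set I := ∫ x, |g x|
  have hlow : ∀ s, 0 < s → -(D * I / s) ≤ J 0 := by
    intro s hs
    refine le_trans ?_ (hanti Set.self_mem_Ici hs.le hs.le)
    have h1 : 0 ≤ ∑ k, ∫ x, b (gaussAvg s (w k) x) (gaussAvg s g x) :=
      Finset.sum_nonneg fun k _ => integral_nonneg fun x => hb.nonneg _ _
    have h2 : ∫ x, gaussAvg s (∂_{e i} φ) x * gaussAvg s g x ≤ ∫ x, D / s * |gaussAvg s g x| := by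
      refine integral_mono (integrable_gaussAvg_mul_gaussAvg s _ _)
        ((integrable_gaussAvg s g).abs.const_mul _) fun x => ?_
      refine (le_abs_self _).trans ?_
      rw [abs_mul]
      gcongr
      exact hDb s hs x
    rw [integral_const_mul] at h2
    have h3 : D / s * ∫ x, |gaussAvg s g x| ≤ D / s * I := by
      gcongr
      exact integral_abs_gaussAvg_le s g
    have h4 : D / s * I = D * I / s := by ring
    simp only [hJ]
    linarith
  have hlim : Filter.Tendsto (fun s : ℝ => -(D * I / s)) Filter.atTop (nhds 0) := by
    simpa using (Filter.tendsto_id.const_div_atTop (D * I)).neg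
  have h0 : 0 ≤ J 0 := le_of_tendsto hlim ((Filter.eventually_gt_atTop 0).mono hlow)
  simp only [hJ, gaussAvg_zero_left] at h0
  linarith

lemma SchwartzMap.integrable_abs_rpow (f : 𝓢(V, ℝ)) {p : ℝ} (hp : 0 < p) :
    Integrable fun x => |f x| ^ p := by
  have := (f.memLp (ENNReal.ofReal p) volume).integrable_norm_rpow (by simpa using hp)
    ENNReal.ofReal_ne_top
  simpa [ENNReal.toReal_ofReal hp.le] using this

lemma exists_integral_lineDeriv_mul_le {p q : ℝ} (hpq : p.HolderConjugate q)
    (e : OrthonormalBasis ι ℝ V) : ∃ C, 0 < C ∧ ∀ (φ : 𝓢(V, ℝ)) (w : ι → 𝓢(V, ℝ)),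
      ∑ k, ∂_{e k} (w k) = Δ φ → ∀ (i : ι) (g : 𝓢(V, ℝ)),
      ∫ x, (∂_{e i} φ) x * g x ≤ C * (∑ k, ∫ x, |w k x| ^ p) + C * ∫ x, |g x| ^ q := by
  obtain ⟨C, hC, H⟩ := exists_isBellman hpq
  refine ⟨C * (Fintype.card ι + 1), by positivity, fun φ w hw i g => ?_⟩
  set P := ∑ k, ∫ x, |w k x| ^ p
  set Q := ∫ x, |g x| ^ q
  have hP : 0 ≤ P := Finset.sum_nonneg fun k _ => integral_nonneg fun x => by positivity
  have hQ : 0 ≤ Q := integral_nonneg fun x => by positivity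
  set R := ∑ k, ∫ x, (|w k x| + |g x|)
  have hbound : ∀ ε, 0 < ε → ε ≤ 1 →
      ∫ x, (∂_{e i} φ) x * g x ≤ C * (P + Fintype.card ι * Q) + C * ε * R := by
    intro ε hε hε1
    obtain ⟨b, b₁, b₂, b₁₁, b₁₂, b₂₂, hb⟩ := H ε hε hε1
    refine (hb.integral_mul_le hw i g).trans ?_
    have hk : ∀ k, ∫ x, b (w k x) (g x)
        ≤ C * (∫ x, |w k x| ^ p) + C * Q + C * ε * ∫ x, (|w k x| + |g x|) := by
      intro k
      have i1 := (w k).integrable_abs_rpow hpq.pos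
      have i2 := g.integrable_abs_rpow hpq.symm.pos
      have i3 : Integrable fun x => |w k x| + |g x| :=
        (w k).integrable.abs.add g.integrable.abs
      have i4 := hb.isTwiceDiff.integrable_comp_gaussAvg hb.zero 0 (w k) g
      simp only [gaussAvg_zero_left] at i4
      have i5 : Integrable fun x => C * (|w k x| ^ p + |g x| ^ q) := (i1.add i2).const_mul C
      calc ∫ x, b (w k x) (g x)
          ≤ ∫ x, (C * (|w k x| ^ p + |g x| ^ q) + C * ε * (|w k x| + |g x|)) :=
            integral_mono i4 (i5.add (i3.const_mul _)) fun x => hb.le _ _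
        _ = _ := by
            rw [integral_add i5 (i3.const_mul _), integral_const_mul, integral_add i1 i2,
              integral_const_mul, mul_add]
    refine (Finset.sum_le_sum fun k _ => hk k).trans (le_of_eq ?_)
    simp only [Finset.sum_add_distrib, ← Finset.mul_sum, Finset.sum_const, Finset.card_univ,
      nsmul_eq_mul]
    ring
  have hlim : Filter.Tendsto (fun ε : ℝ => C * (P + Fintype.card ι * Q) + C * ε * R)
      (nhdsWithin 0 (Set.Ioi 0)) (nhds (C * (P + Fintype.card ι * Q))) := by
    have : Continuous fun ε : ℝ => C * (P + Fintype.card ι * Q) + C * ε * R := by fun_prop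
    simpa using (this.tendsto 0).mono_left nhdsWithin_le_nhds
  have hle : ∫ x, (∂_{e i} φ) x * g x ≤ C * (P + Fintype.card ι * Q) := by
    refine ge_of_tendsto hlim ?_
    filter_upwards [Ioc_mem_nhdsGT (zero_lt_one (α := ℝ))] with ε hε
    exact hbound ε hε.1 hε.2
  have h1 : 0 ≤ C * (Fintype.card ι * P) := by positivity
  have h2 : 0 ≤ C * Q := by positivity
  linarith

lemma abs_rpow_mul_self_rpow {p q : ℝ} (hpq : p.HolderConjugate q) (a : ℝ) :
    |(|a| ^ (p - 2) * a)| ^ q = |a| ^ p := by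
  rcases eq_or_ne a 0 with rfl | ha
  · simp [Real.zero_rpow hpq.ne_zero, Real.zero_rpow hpq.symm.ne_zero]
  · have h0 : 0 < |a| := abs_pos.2 ha
    rw [abs_mul, abs_of_nonneg (by positivity : 0 ≤ |a| ^ (p - 2))]
    nth_rewrite 2 [← Real.rpow_one |a|]
    rw [← Real.rpow_add h0, ← Real.rpow_mul h0.le]
    congr 1
    linear_combination hpq.sub_one_mul_conj

/-- A bound on the pairings with all Schwartz functions controls the `L^p` norm. -/
lemma integral_abs_rpow_le_of_pairing {p q : ℝ} (hpq : p.HolderConjugate q) {C D : ℝ} (hC : 0 < C)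
    (A : 𝓢(V, ℝ)) (h : ∀ g : 𝓢(V, ℝ), ∫ x, A x * g x ≤ C * D + C * ∫ x, |g x| ^ q) :
    ∫ x, |A x| ^ p ≤ 2 * C * (2 * C) ^ (1 / (q - 1)) * D := by
  have hp := hpq.pos
  have hq := hpq.symm.pos
  have hq1 := hpq.symm.lt
  have : Fact (1 ≤ ENNReal.ofReal p) := ⟨by simpa using hpq.lt.le⟩
  have : Fact (1 ≤ ENNReal.ofReal q) := ⟨by simpa using hq1.le⟩
  have : ENNReal.HolderConjugate (ENNReal.ofReal p) (ENNReal.ofReal q) := hpq.ennrealOfReal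
  have hnorm : ∀ {f : V → ℝ} (hf : MemLp f (ENNReal.ofReal q)),
      ‖hf.toLp f‖ ^ q = ∫ x, |f x| ^ q := by
    intro f hf
    have h0 : 0 ≤ ∫ x, |f x| ^ q := integral_nonneg fun x => by positivity
    rw [Lp.norm_toLp, hf.eLpNorm_eq_integral_rpow_norm (by simpa using hq) ENNReal.ofReal_ne_top,
      ENNReal.toReal_ofReal hq.le, ENNReal.toReal_ofReal (by positivity)]
    simp only [Real.norm_eq_abs]
    rw [← Real.rpow_mul h0, inv_mul_cancel₀ hq.ne', Real.rpow_one]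
  obtain ⟨L, hL⟩ : ∃ L : Lp ℝ (ENNReal.ofReal q) (volume : Measure V) →L[ℝ] ℝ,
      ∀ (f : V → ℝ) (hf : MemLp f (ENNReal.ofReal q) volume), L (hf.toLp f) = ∫ x, A x * f x := by
    refine ⟨(ContinuousLinearMap.mul ℝ ℝ).lpPairing volume (ENNReal.ofReal p) (ENNReal.ofReal q)
        (A.toLp (ENNReal.ofReal p) volume), fun f hf => ?_⟩
    rw [ContinuousLinearMap.lpPairing_eq_integral]
    refine integral_congr_ae ?_
    filter_upwards [hf.coeFn_toLp, A.coeFn_toLp (ENNReal.ofReal p)] with x h1 h2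
    simp [h1, h2]
  have hLp : ∀ G : Lp ℝ (ENNReal.ofReal q) (volume : Measure V), L G ≤ C * D + C * ‖G‖ ^ q := by
    have hcl : IsClosed {G : Lp ℝ (ENNReal.ofReal q) (volume : Measure V) |
        L G ≤ C * D + C * ‖G‖ ^ q} :=
      isClosed_le L.continuous (continuous_const.add
        (continuous_const.mul (continuous_norm.rpow_const fun _ => Or.inr hq.le)))
    have hdense := SchwartzMap.denseRange_toLpCLM (E := V) (F := ℝ)
      (μ := volume) (p := ENNReal.ofReal q) ENNReal.ofReal_ne_top
    intro G
    refine hdense.induction_on G hcl fun g => ?_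
    have h1 := hL g (g.memLp (ENNReal.ofReal q) volume)
    have h2 := hnorm (g.memLp (ENNReal.ofReal q) volume)
    rw [SchwartzMap.toLpCLM_apply, SchwartzMap.toLp, h1, h2]
    exact h g
  set δ := (2 * C) ^ (-(1 / (q - 1))) with hδ
  have hδ0 : 0 < δ := by positivity
  have hδq : C * δ ^ q = δ / 2 := by
    have e1 : δ ^ q = δ ^ (q - 1) * δ := by
      rw [Real.rpow_sub_one hδ0.ne', div_mul_cancel₀ _ hδ0.ne']
    have e2 : δ ^ (q - 1) = (2 * C)⁻¹ := by
      rw [hδ, ← Real.rpow_mul (by positivity), neg_mul, one_div,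
        inv_mul_cancel₀ (by linarith : q - 1 ≠ 0), Real.rpow_neg_one]
    rw [e1, e2]
    field_simp
  set f : V → ℝ := fun x => δ * (|A x| ^ (p - 2) * A x) with hfdef
  have hfq : ∀ x, |f x| ^ q = δ ^ q * |A x| ^ p := fun x => by
    rw [hfdef]
    simp only
    rw [abs_mul, abs_of_pos hδ0, Real.mul_rpow hδ0.le (abs_nonneg _), abs_rpow_mul_self_rpow hpq]
  have hfmeas : AEStronglyMeasurable f volume := by
    have := A.continuous.measurable
    exact Measurable.aestronglyMeasurable (by fun_prop)
  have hf : MemLp f (ENNReal.ofReal q) := by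
    rw [← integrable_norm_rpow_iff hfmeas (by simpa using hq) ENNReal.ofReal_ne_top,
      ENNReal.toReal_ofReal hq.le]
    simp only [Real.norm_eq_abs, hfq]
    exact (A.integrable_abs_rpow hp).const_mul _
  have key := hLp (hf.toLp f)
  rw [hL f hf, hnorm hf] at key
  simp only [hfq] at key
  have hAf : ∀ x, A x * f x = δ * |A x| ^ p := fun x => by
    rcases eq_or_ne (A x) 0 with hx | hx
    · simp [hx, Real.zero_rpow hp.ne']
    · have h0 : 0 < |A x| := abs_pos.2 hx
      have e : |A x| ^ p = |A x| ^ (p - 2) * (A x * A x) := by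
        rw [← abs_mul_abs_self, ← sq, ← Real.rpow_natCast, ← Real.rpow_add h0]
        congr 1
        push_cast
        ring
      rw [e, hfdef]
      ring
  simp only [hAf] at key
  rw [integral_const_mul, integral_const_mul, ← mul_assoc, hδq] at key
  have hδinv : (2 * C) ^ (1 / (q - 1)) = δ⁻¹ := by
    rw [hδ, Real.rpow_neg (by positivity), inv_inv]
  rw [hδinv]
  have h2 : δ * ∫ x, |A x| ^ p ≤ 2 * C * D := by linarith
  rw [mul_right_comm, ← div_eq_mul_inv, le_div_iff₀ hδ0]
  linarith

/-- If the Laplacian of `φ` is the divergence of `w`, then the `L^p` norms of the first derivatives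
of `φ` are controlled by those of the components of `w`, for every `1 < p < ∞`. -/
theorem exists_eLpNorm_lineDeriv_rpow_le {p : ℝ} (hp : 1 < p) (e : OrthonormalBasis ι ℝ V) :
    ∃ C : NNReal, ∀ (φ : 𝓢(V, ℝ)) (w : ι → 𝓢(V, ℝ)), ∑ k, ∂_{e k} (w k) = Δ φ → ∀ i,
      eLpNorm (∂_{e i} φ : 𝓢(V, ℝ)) (ENNReal.ofReal p) volume ^ p
        ≤ C * ∑ k, eLpNorm (w k) (ENNReal.ofReal p) volume ^ p := by
  have hpq := Real.HolderConjugate.conjExponent hp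
  have hp0 := hpq.pos
  obtain ⟨C, hC, H⟩ := exists_integral_lineDeriv_mul_le hpq e
  have hK : 0 ≤ 2 * C * (2 * C) ^ (1 / (p.conjExponent - 1)) := by positivity
  refine ⟨⟨2 * C * (2 * C) ^ (1 / (p.conjExponent - 1)), hK⟩, fun φ w hw i => ?_⟩
  have hnorm : ∀ f : 𝓢(V, ℝ), eLpNorm f (ENNReal.ofReal p) volume ^ p
      = ENNReal.ofReal (∫ x, |f x| ^ p) := by
    intro f
    have h0 : 0 ≤ ∫ x, |f x| ^ p := integral_nonneg fun x => by positivity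
    rw [(f.memLp _ volume).eLpNorm_eq_integral_rpow_norm (by simpa using hp0)
      ENNReal.ofReal_ne_top, ENNReal.toReal_ofReal hp0.le]
    simp only [Real.norm_eq_abs]
    rw [ENNReal.ofReal_rpow_of_nonneg (by positivity) hp0.le, ← Real.rpow_mul h0,
      inv_mul_cancel₀ hp0.ne', Real.rpow_one]
  have key := integral_abs_rpow_le_of_pairing hpq hC (∂_{e i} φ) (H φ w hw i)
  simp only [hnorm]
  rw [← ENNReal.ofReal_sum_of_nonneg fun k _ => integral_nonneg fun x => by positivity]
  refine (ENNReal.ofReal_le_ofReal key).trans_eq ?_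
  rw [ENNReal.ofReal_mul hK]
  congr 1
  exact ENNReal.ofReal_eq_coe_nnreal hK

end Riesz

section StrainVorticity

local notation "E3" => EuclideanSpace ℝ (Fin 3)

lemma basisFun_eq_ee (i : Fin 3) : EuclideanSpace.basisFun (Fin 3) ℝ i = ee i := by
  simp [ee]

lemma lineDerivOp_ee_apply (u : Fin 3 → 𝓢(E3, ℝ)) (i j : Fin 3) (x : E3) :
    (∂_{ee i} (u j)) x = pdW u i j x :=
  SchwartzMap.lineDerivOp_apply_eq_fderiv ..

lemma toE3_apply (f : Fin 3 → ℝ) (i : Fin 3) : toE3 f i = f i := rfl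

lemma abs_le_norm_toE3 (f : Fin 3 → ℝ) (i : Fin 3) : |f i| ≤ ‖toE3 f‖ :=
  PiLp.norm_apply_le (toE3 f) i

lemma norm_toE3_le_sum (f : Fin 3 → ℝ) : ‖toE3 f‖ ≤ ∑ i, |f i| := by
  rw [EuclideanSpace.norm_eq]
  refine Real.sqrt_le_iff.2 ⟨Finset.sum_nonneg fun i _ => abs_nonneg _, ?_⟩
  simp only [toE3_apply, Real.norm_eq_abs]
  exact Finset.sum_sq_le_sq_sum_of_nonneg fun i _ => abs_nonneg _

lemma twoStrainE3Field_eq (u : ℝ → Fin 3 → 𝓢(E3, ℝ)) (t : ℝ) (x : E3) :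
    twoStrainE3Field u t x = toE3 fun k => pdW (u t) k 2 x + pdW (u t) 2 k x := by
  unfold twoStrainE3Field
  congr 1
  ext k
  simp [Matrix.mulVec, dotProduct, Fin.sum_univ_three, strainW]
  ring

lemma e3CrossVortField_eq (u : ℝ → Fin 3 → 𝓢(E3, ℝ)) (t : ℝ) (x : E3) :
    e3CrossVortField u t x = toE3 fun k => pdW (u t) k 2 x - pdW (u t) 2 k x := by
  unfold e3CrossVortField
  congr 1
  ext k
  fin_cases k <;> simp [cross, vortW]

/-- For a divergence-free field `v`, the Laplacian of `v₃` is the divergence of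
`∇v₃ + σ ∂₃v`. -/
lemma sum_lineDerivOp_grad_add_eq_laplacian {v : Fin 3 → 𝓢(E3, ℝ)}
    (hv : ∀ x, ∑ i, pdW v i i x = 0) (σ : ℝ) :
    ∑ k, ∂_{EuclideanSpace.basisFun (Fin 3) ℝ k} (∂_{ee k} (v 2) + σ • ∂_{ee 2} (v k))
      = Δ (v 2) := by
  have hdiv : ∑ k, ∂_{ee k} (v k) = 0 := by
    ext x
    simpa [lineDerivOp_ee_apply] using hv x
  rw [SchwartzMap.laplacian_eq_sum (EuclideanSpace.basisFun (Fin 3) ℝ)]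
  simp only [basisFun_eq_ee, LineDeriv.lineDerivOp_add, LineDeriv.lineDerivOp_smul,
    Finset.sum_add_distrib, ← Finset.smul_sum, SchwartzMap.lineDerivOp_lineDerivOp_comm _ _ (ee 2)]
  rw [← LineDeriv.lineDerivOp_sum, hdiv]
  simp [LineDeriv.lineDerivOp_zero]

lemma eLpNorm_toE3_two_mul_sub_le {q c N : ℝ≥0∞} (hq : 1 ≤ q) {a w : Fin 3 → E3 → ℝ}
    (hac : ∀ k, Continuous (a k)) (hwc : ∀ k, Continuous (w k))
    (ha : ∀ k, eLpNorm (a k) q volume ≤ c * N) (hw : ∀ k, eLpNorm (w k) q volume ≤ N) :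
    eLpNorm (fun x => toE3 fun k => 2 * a k x - w k x) q volume ≤ 3 * (2 * c + 1) * N := by
  have h2 : ‖(2 : ℝ)‖ₑ = 2 := by simp [enorm_eq_nnnorm]
  have hk : ∀ k, eLpNorm ((2 : ℝ) • a k - w k) q volume ≤ (2 * c + 1) * N := by
    intro k
    refine (eLpNorm_sub_le ((hac k).const_smul (2 : ℝ)).aestronglyMeasurable
      (hwc k).aestronglyMeasurable hq).trans ?_
    rw [eLpNorm_const_smul, h2, add_mul, one_mul, mul_assoc]
    gcongr
    exacts [ha k, hw k]
  calc eLpNorm (fun x => toE3 fun k => 2 * a k x - w k x) q volume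
      ≤ eLpNorm (∑ k, fun x => ‖((2 : ℝ) • a k - w k) x‖) q volume := by
        refine eLpNorm_mono_real fun x => (norm_toE3_le_sum _).trans_eq ?_
        simp
    _ ≤ ∑ k, eLpNorm (fun x => ‖((2 : ℝ) • a k - w k) x‖) q volume :=
        eLpNorm_sum_le (fun k _ =>
          (((hac k).const_smul (2 : ℝ)).sub (hwc k)).norm.aestronglyMeasurable) hq
    _ ≤ ∑ _k : Fin 3, (2 * c + 1) * N :=
        Finset.sum_le_sum fun k _ => (eLpNorm_norm _).trans_le (hk k)
    _ = _ := by
        simp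
        ring

lemma exists_eLpNorm_lineDeriv_le {q : ℝ} (hq : 1 < q) :
    ∃ c : NNReal, ∀ (φ : 𝓢(E3, ℝ)) (w : Fin 3 → 𝓢(E3, ℝ)) (N : ℝ≥0∞),
      ∑ k, ∂_{EuclideanSpace.basisFun (Fin 3) ℝ k} (w k) = Δ φ →
      (∀ k, eLpNorm (w k) (ENNReal.ofReal q) volume ≤ N) → ∀ k,
      eLpNorm (∂_{ee k} φ : 𝓢(E3, ℝ)) (ENNReal.ofReal q) volume ≤ c * N := by
  obtain ⟨K, hK⟩ := exists_eLpNorm_lineDeriv_rpow_le hq (EuclideanSpace.basisFun (Fin 3) ℝ)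
  have hq0 : 0 < q := by linarith
  refine ⟨(3 * K) ^ (1 / q), fun φ w N hw hwN k => ?_⟩
  have h1 := hK φ w hw k
  rw [basisFun_eq_ee] at h1
  have h2 : ∑ k, eLpNorm (w k) (ENNReal.ofReal q) volume ^ q ≤ 3 * N ^ q := by
    refine (Finset.sum_le_sum fun k _ => ENNReal.rpow_le_rpow (hwN k) hq0.le).trans_eq ?_
    simp
  rw [← ENNReal.rpow_le_rpow_iff hq0]
  refine h1.trans ((mul_le_mul_right h2 _).trans_eq ?_)
  rw [ENNReal.mul_rpow_of_nonneg _ _ hq0.le, ← ENNReal.coe_rpow_of_nonneg _ hq0.le,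
    ← NNReal.rpow_mul, one_div, inv_mul_cancel₀ hq0.ne', NNReal.rpow_one]
  push_cast
  ring

/-- Reversing the sign of `∂₃v` in `∇v₃ + σ ∂₃v` changes the `L^q` norm by at most a constant
factor. -/
lemma exists_eLpNorm_grad_sub_le {q : ℝ} (hq : 1 < q) :
    ∃ C : NNReal, ∀ v : Fin 3 → 𝓢(E3, ℝ), (∀ x, ∑ i, pdW v i i x = 0) → ∀ σ : ℝ,
      eLpNorm (fun x => toE3 fun k => pdW v k 2 x - σ * pdW v 2 k x) (ENNReal.ofReal q) volume
        ≤ C * eLpNorm (fun x => toE3 fun k => pdW v k 2 x + σ * pdW v 2 k x)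
          (ENNReal.ofReal q) volume := by
  obtain ⟨c, hc⟩ := exists_eLpNorm_lineDeriv_le hq
  refine ⟨3 * (2 * c + 1), fun v hv σ => ?_⟩
  obtain ⟨w, hw, hwx⟩ : ∃ w : Fin 3 → 𝓢(E3, ℝ),
      ∑ k, ∂_{EuclideanSpace.basisFun (Fin 3) ℝ k} (w k) = Δ (v 2) ∧
      ∀ k x, w k x = pdW v k 2 x + σ * pdW v 2 k x :=
    ⟨_, sum_lineDerivOp_grad_add_eq_laplacian hv σ, fun k x => by
      simp [lineDerivOp_ee_apply]⟩
  have hwN : ∀ k, eLpNorm (w k) (ENNReal.ofReal q) volume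
      ≤ eLpNorm (fun x => toE3 fun k => pdW v k 2 x + σ * pdW v 2 k x)
        (ENNReal.ofReal q) volume := fun k =>
    eLpNorm_mono fun x => by
      rw [hwx, Real.norm_eq_abs]
      exact abs_le_norm_toE3 (fun k => pdW v k 2 x + σ * pdW v 2 k x) k
  have key := eLpNorm_toE3_two_mul_sub_le (by simpa using hq.le)
    (fun k => (∂_{ee k} (v 2) : 𝓢(E3, ℝ)).continuous) (fun k => (w k).continuous)
    (hc (v 2) w _ hw hwN) hwN
  have hfield : (fun x => toE3 fun k => pdW v k 2 x - σ * pdW v 2 k x)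
      = fun x => toE3 fun k => 2 * (∂_{ee k} (v 2) : 𝓢(E3, ℝ)) x - w k x := by
    ext1 x
    congr 1
    ext1 k
    rw [hwx, lineDerivOp_ee_apply]
    ring
  rw [hfield]
  exact_mod_cast key

/-- A pointwise bound by a constant multiple transfers finiteness of the integral of a power. -/
lemma lintegral_rpow_ne_top_of_le_mul {α : Type*} [MeasurableSpace α] {μ : Measure α} {s : Set α}
    (hs : MeasurableSet s) {f g : α → ℝ≥0∞} {p : ℝ} (hp : 0 ≤ p) {C : NNReal}
    (h : ∀ t ∈ s, f t ≤ C * g t) (hg : ∫⁻ t in s, g t ^ p ∂μ ≠ ⊤) :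
    ∫⁻ t in s, f t ^ p ∂μ ≠ ⊤ := by
  have hC : (C : ℝ≥0∞) ^ p ≠ ⊤ := ENNReal.rpow_ne_top_of_nonneg hp ENNReal.coe_ne_top
  refine ne_top_of_le_ne_top (ENNReal.mul_ne_top hC hg) ?_
  rw [← lintegral_const_mul' _ _ hC]
  refine setLIntegral_mono' hs fun t ht => ?_
  rw [← ENNReal.mul_rpow_of_nonneg _ _ hp]
  exact ENNReal.rpow_le_rpow (h t ht) hp

end StrainVorticity

/-- Fix `1 < q < ∞`, `0 < p < ∞`, `0 < T ≤ ∞`. For a time-dependent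
divergence-free Schwartz vector field `u` on `[0, T) × ℝ³`, with
`t ↦ ‖2S(t,·)e₃‖_{L^q}` and `t ↦ ‖(e₃ × ω)(t,·)‖_{L^q}` measurable, one has
`∫₀^T ‖(e₃ × ω)(t,·)‖_{L^q}^p dt = ∞` iff `∫₀^T ‖2S(t,·)e₃‖_{L^q}^p dt = ∞`:
the Chae–Choe criterion on `e₃ × ω` is equivalent to the criterion on `S e₃`. -/
theorem e3CrossVort_blowup_iff_strainE3_blowup (q p : ℝ) (hq1 : 1 < q) (hp : 0 < p)
    (T : ℝ≥0∞) (hT : 0 < T)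
    (u : ℝ → Fin 3 → SchwartzMap (EuclideanSpace ℝ (Fin 3)) ℝ)
    (hdiv : ∀ t : ℝ, 0 ≤ t → ENNReal.ofReal t < T → ∀ x, ∑ i, pdW (u t) i i x = 0)
    (hmeasS : Measurable fun t => eLpNorm (twoStrainE3Field u t) (ENNReal.ofReal q) volume)
    (hmeasω : Measurable fun t => eLpNorm (e3CrossVortField u t) (ENNReal.ofReal q) volume) :
    (∫⁻ t in {t : ℝ | 0 ≤ t ∧ ENNReal.ofReal t < T},
        (eLpNorm (e3CrossVortField u t) (ENNReal.ofReal q) volume) ^ p) = ⊤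
      ↔ (∫⁻ t in {t : ℝ | 0 ≤ t ∧ ENNReal.ofReal t < T},
          (eLpNorm (twoStrainE3Field u t) (ENNReal.ofReal q) volume) ^ p) = ⊤ := by
  obtain ⟨C, hC⟩ := exists_eLpNorm_grad_sub_le hq1
  have hs : MeasurableSet {t : ℝ | 0 ≤ t ∧ ENNReal.ofReal t < T} :=
    measurableSet_Ici.inter (measurableSet_lt ENNReal.measurable_ofReal measurable_const)
  have hS : ∀ t, twoStrainE3Field u t
      = fun x => toE3 fun k => pdW (u t) k 2 x + pdW (u t) 2 k x :=
    fun t => funext fun x => twoStrainE3Field_eq u t x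
  have hω : ∀ t, e3CrossVortField u t
      = fun x => toE3 fun k => pdW (u t) k 2 x - pdW (u t) 2 k x :=
    fun t => funext fun x => e3CrossVortField_eq u t x
  rw [← not_iff_not]
  constructor <;> refine lintegral_rpow_ne_top_of_le_mul hs hp.le (C := C) fun t ht => ?_
  · have := hC (u t) (hdiv t ht.1 ht.2) (-1)
    simpa only [hS, hω, neg_mul, one_mul, sub_neg_eq_add, ← sub_eq_add_neg] using this
  · have := hC (u t) (hdiv t ht.1 ht.2) 1
    simpa only [hS, hω, one_mul] using this
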